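/- arXiv:0806.1709 — 7 statements merged into one kernel-verified Lean document; each statement's English description precedes it below -/
import Mathlib

section
/- Let z > 0, let N ≥ 0 and K ≥ 2 be integers, let x_1, …, x_N ∈ ℝ³ be pairwise distinct points, and let R_1, …, R_K ∈ ℝ³ be pairwise distinct points with x_i ≠ R_k for all i, k. Then (1/2)·Σ_{1 ≤ i ≠ j ≤ N} 1/‖x_i − x_j‖ − Σ_{i=1}^N Σ_{k=1}^K z/‖x_i − R_k‖ + (1/2)·Σ_{1 ≤ k ≠ k' ≤ K} z²/‖R_k − R_{k'}‖ ≥ − Σ_{i=1}^N (z + √(2z) + 1/2)/δ_R(x_i) + (z²/4)·Σ_{k=1}^K 1/δ_R(R_k), where for x ∈ ℝ³, δ_R(x) = min{‖x − R_k‖ : 1 ≤ k ≤ K, R_k ≠ x} is the distance from x to the nearest point of {R_1, …, R_K} different from x itself (Lieb–Yau inequality). -/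
open Finset

/-- The distance from `y` to the nearest point of `{R_1, …, R_K}` different from `y` itself. -/
noncomputable def nearestNucleusDist {K : ℕ} (R : Fin K → EuclideanSpace ℝ (Fin 3))
    (y : EuclideanSpace ℝ (Fin 3)) : ℝ :=
  sInf {d : ℝ | ∃ k : Fin K, R k ≠ y ∧ d = ‖y - R k‖}


/-- Electric field of a unit charge smeared on the sphere of radius `a` around `p`. -/
noncomputable def fld (p : EuclideanSpace ℝ (Fin 3)) (a : ℝ) (u : EuclideanSpace ℝ (Fin 3)) :
    EuclideanSpace ℝ (Fin 3) :=
  if a < ‖u - p‖ then (‖u - p‖ ^ 3)⁻¹ • (u - p) else 0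

/-- Potential of a unit charge smeared on the sphere of radius `a` around `p`. -/
noncomputable def pot (p : EuclideanSpace ℝ (Fin 3)) (a : ℝ) (u : EuclideanSpace ℝ (Fin 3)) : ℝ :=
  (max ‖u - p‖ a)⁻¹

section ray
open MeasureTheory Set Filter Topology

lemma ray_normsq (p q ω : EuclideanSpace ℝ (Fin 3)) (hω : ‖ω‖ = 1) (r : ℝ) :
    ‖p + r • ω - q‖ ^ 2 = r ^ 2 + 2 * r * inner ℝ (p - q) ω + ‖p - q‖ ^ 2 := by
  have : p + r • ω - q = (p - q) + r • ω := by abel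
  rw [this, norm_add_sq_real, inner_smul_right, norm_smul, hω, mul_one, Real.norm_eq_abs, sq_abs]
  ring

lemma pot_ray_deriv (p q ω : EuclideanSpace ℝ (Fin 3)) (b : ℝ) (hb : 0 < b)
    (r : ℝ) (hr : ‖p + r • ω - q‖ ≠ b) :
    HasDerivAt (fun r : ℝ => pot q b (p + r • ω)) (- inner ℝ ω (fld q b (p + r • ω))) r := by
  have hc : Continuous (fun r : ℝ => ‖p + r • ω - q‖) := by fun_prop
  rcases lt_or_gt_of_ne hr with h | h
  · have h1 : fld q b (p + r • ω) = 0 := by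
      unfold fld; rw [if_neg (not_lt.2 h.le)]
    rw [h1, inner_zero_right, neg_zero]
    refine (hasDerivAt_const r (b⁻¹)).congr_of_eventuallyEq ?_
    filter_upwards [hc.continuousAt.eventually (gt_mem_nhds h)] with s hs
    simp only [pot]; rw [max_eq_right hs.le]
  · have h1 : fld q b (p + r • ω) = (‖p + r • ω - q‖ ^ 3)⁻¹ • (p + r • ω - q) := by
      unfold fld; rw [if_pos h]
    have hpos : 0 < ‖p + r • ω - q‖ := hb.trans h
    have hd : HasDerivAt (fun r : ℝ => p + r • ω - q) ω r := by
      have := ((hasDerivAt_id r).smul_const ω).const_add p |>.sub_const q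
      simpa using this
    have hs := hd.norm_sq
    have hs2 := (hs.sqrt (by positivity)).inv (by
      rw [Real.sqrt_sq hpos.le]; exact hpos.ne')
    rw [h1]
    have e : (-inner ℝ ω ((‖p + r • ω - q‖ ^ 3)⁻¹ • (p + r • ω - q))) =
       -(2 * inner ℝ (p + r • ω - q) ω / (2 * √(‖p + r • ω - q‖ ^ 2))) / √(‖p + r • ω - q‖ ^ 2) ^ 2 := by
      rw [Real.sqrt_sq hpos.le, inner_smul_right, real_inner_comm]
      field_simp
    rw [e]
    refine hs2.congr_of_eventuallyEq ?_
    filter_upwards [hc.continuousAt.eventually (lt_mem_nhds h)] with s hs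
    simp only [pot, Pi.inv_apply]; rw [max_eq_left hs.le, Real.sqrt_sq (norm_nonneg _)]

lemma finite_quad (β γ : ℝ) : {r : ℝ | r ^ 2 + 2 * r * β + γ = 0}.Countable := by
  refine ((Set.toFinite {-β + √(β ^ 2 - γ), -β - √(β ^ 2 - γ)}).subset ?_).countable
  intro r hr
  simp only [mem_ofPred_eq] at hr
  have h : (r + β) ^ 2 = β ^ 2 - γ := by linarith
  have h2 : √(β ^ 2 - γ) = |r + β| := by rw [← h, Real.sqrt_sq_eq_abs]
  rw [h2]
  simp only [mem_insert_iff, mem_singleton_iff]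
  rcases abs_cases (r + β) with ⟨h, _⟩ | ⟨h, _⟩ <;> rw [h]
  · left; ring
  · right; ring

lemma countable_tie (p q q' ω : EuclideanSpace ℝ (Fin 3)) (hω : ‖ω‖ = 1)  :
    {r : ℝ | ‖p + r • ω - q‖ = ‖p + r • ω - q'‖ ∧
      ∃ s : ℝ, ‖p + s • ω - q‖ ≠ ‖p + s • ω - q'‖}.Countable := by
  refine Set.Subsingleton.countable ?_
  have key : ∀ r : ℝ, ‖p + r • ω - q‖ = ‖p + r • ω - q'‖ ↔
      2 * r * inner ℝ (p - q) ω + ‖p - q‖ ^ 2 = 2 * r * inner ℝ (p - q') ω + ‖p - q'‖ ^ 2 := by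
    intro r
    rw [← sq_eq_sq₀ (norm_nonneg _) (norm_nonneg _), ray_normsq _ _ _ hω, ray_normsq _ _ _ hω]
    constructor <;> intro h <;> linarith
  rintro r ⟨hr, s, hs⟩ r' ⟨hr', -⟩
  rw [Ne, key] at hs
  rw [key] at hr hr'
  by_contra hne
  have h1 : (r - r') * (inner ℝ (p - q) ω - inner ℝ (p - q') ω) = 0 := by linarith
  have h2 : inner ℝ (p - q) ω = inner ℝ (p - q') ω := by
    rcases mul_eq_zero.1 h1 with h | h
    · exact absurd (sub_eq_zero.1 h) hne
    · exact sub_eq_zero.1 h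
  apply hs
  rw [h2] at hr ⊢
  linarith

lemma sel_cont {ι : Type*} (q : ι → EuclideanSpace ℝ (Fin 3))
    (sel : EuclideanSpace ℝ (Fin 3) → ι) (hsel : ∀ u l, ‖u - q (sel u)‖ ≤ ‖u - q l‖) :
    Continuous (fun u => ‖u - q (sel u)‖) := by
  refine (LipschitzWith.of_le_add (f := fun u => ‖u - q (sel u)‖) fun u w => ?_).continuous
  calc ‖u - q (sel u)‖ ≤ ‖u - q (sel w)‖ := hsel _ _
    _ = ‖(w - q (sel w)) + (u - w)‖ := by congr 1; abel
    _ ≤ _ := by rw [dist_eq_norm]; exact norm_add_le _ _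

lemma ray_integral {ι : Type*} [Finite ι] (q : ι → EuclideanSpace ℝ (Fin 3))
    (sel : EuclideanSpace ℝ (Fin 3) → ι) (hsel : ∀ u l, ‖u - q (sel u)‖ ≤ ‖u - q l‖)
    (p ω : EuclideanSpace ℝ (Fin 3)) (hω : ‖ω‖ = 1) (a b : ℝ) (hb : 0 < b)
    (hint : IntegrableOn (fun r : ℝ =>
      inner ℝ ω (fld (q (sel (p + r • ω))) b (p + r • ω))) (Ioi a)) :
    ∫ r in Ioi a, inner ℝ ω (fld (q (sel (p + r • ω))) b (p + r • ω)) =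
      pot (q (sel (p + a • ω))) b (p + a • ω) := by
  set g : ℝ → ℝ := fun r => pot (q (sel (p + r • ω))) b (p + r • ω) with hg
  have hgc : Continuous g := by
    have h1 := sel_cont q sel hsel
    have h2 : Continuous (fun r : ℝ => p + r • ω) := by fun_prop
    have h3 := h1.comp h2
    simp only [hg, pot]
    refine Continuous.inv₀ (h3.max continuous_const) fun r => ?_
    exact (lt_of_lt_of_le hb (le_max_right _ _)).ne'
  set S : Set ℝ := (⋃ k, {r : ℝ | r ^ 2 + 2 * r * inner ℝ (p - q k) ω + (‖p - q k‖ ^ 2 - b ^ 2) = 0})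
    ∪ ⋃ k, ⋃ l, {r : ℝ | ‖p + r • ω - q k‖ = ‖p + r • ω - q l‖ ∧
      ∃ s : ℝ, ‖p + s • ω - q k‖ ≠ ‖p + s • ω - q l‖} with hS
  have hSc : S.Countable := by
    refine (countable_iUnion fun k => finite_quad _ _).union
      (countable_iUnion fun k => countable_iUnion fun l => countable_tie _ _ _ _ hω)
  have hder : ∀ r, r ∉ S → HasDerivAt g
      (- inner ℝ ω (fld (q (sel (p + r • ω))) b (p + r • ω))) r := by
    intro r hr
    simp only [hS, mem_union, mem_iUnion, mem_ofPred_eq, not_or, not_exists, not_and, not_not, Ne] at hr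
    obtain ⟨h1, h2⟩ := hr
    set k := sel (p + r • ω) with hk
    have hne : ‖p + r • ω - q k‖ ≠ b := by
      intro h
      apply h1 k
      have := ray_normsq p (q k) ω hω r
      rw [h] at this
      linarith
    refine (pot_ray_deriv p (q k) ω b hb r hne).congr_of_eventuallyEq ?_
    have hev : ∀ l, ∀ᶠ s : ℝ in 𝓝 r, ‖p + s • ω - q k‖ ≤ ‖p + s • ω - q l‖ := by
      intro l
      rcases (hsel (p + r • ω) l).lt_or_eq with h | h
      · have c1 : Continuous (fun r : ℝ => ‖p + r • ω - q k‖) := by fun_prop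
        have c2 : Continuous (fun r : ℝ => ‖p + r • ω - q l‖) := by fun_prop
        exact (c1.continuousAt.eventually_lt c2.continuousAt h).mono fun s hs => hs.le
      · exact Eventually.of_forall fun s => (h2 k l h s).le
    filter_upwards [eventually_all.2 hev] with s hs
    simp only [hg, pot]
    rw [le_antisymm (hsel (p + s • ω) k) (hs _)]
  have htend : Tendsto g atTop (𝓝 0) := by
    obtain ⟨M, hM⟩ := (Set.finite_range fun k => ‖p - q k‖).bddAbove
    have h1 : ∀ r, r - M ≤ max ‖p + r • ω - q (sel (p + r • ω))‖ b := by
      intro r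
      refine le_trans ?_ (le_max_left _ _)
      set k := sel (p + r • ω)
      have h2 : ‖p - q k‖ ≤ M := hM (mem_range_self k)
      have h3 : r • ω = (p + r • ω - q k) - (p - q k) := by abel
      have h4 : r ≤ ‖r • ω‖ := by rw [norm_smul, hω, mul_one]; exact Real.le_norm_self r
      have h5 := norm_sub_le (p + r • ω - q k) (p - q k)
      rw [← h3] at h5
      linarith
    refine Tendsto.inv_tendsto_atTop ?_
    exact tendsto_atTop_mono h1 (tendsto_atTop_add_const_right _ (-M) tendsto_id)
  have hI := intervalIntegral_tendsto_integral_Ioi a hint tendsto_id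
  have hE : ∀ᶠ c in atTop, ∫ r in a..c, inner ℝ ω (fld (q (sel (p + r • ω))) b (p + r • ω)) = g a - g c := by
    filter_upwards [eventually_ge_atTop a] with c hc
    have := integral_eq_of_hasDerivAt_off_countable_of_le g
      (fun r => - inner ℝ ω (fld (q (sel (p + r • ω))) b (p + r • ω))) hc hSc hgc.continuousOn
      (fun r hr => hder r hr.2) (by
        refine IntervalIntegrable.neg ?_
        rw [intervalIntegrable_iff_integrableOn_Ioc_of_le hc]
        exact hint.mono_set Ioc_subset_Ioi_self)
    rw [intervalIntegral.integral_neg] at this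
    linarith
  have h2 : Tendsto (fun c => g a - g c) atTop (𝓝 (g a - 0)) := htend.const_sub _
  have h3 := tendsto_nhds_unique (hI.congr' hE) h2
  rw [h3, sub_zero]

lemma polar (F : EuclideanSpace ℝ (Fin 3) → ℝ) (hF : Integrable F) :
    (∀ᵐ ω : Metric.sphere (0 : EuclideanSpace ℝ (Fin 3)) 1 ∂((volume : Measure (EuclideanSpace ℝ (Fin 3))).toSphere),
      IntegrableOn (fun r : ℝ => r ^ 2 * F (r • (ω : EuclideanSpace ℝ (Fin 3)))) (Ioi 0)) ∧
    ∫ u, F u = ∫ ω : Metric.sphere (0 : EuclideanSpace ℝ (Fin 3)) 1, (∫ r in Ioi (0:ℝ), r ^ 2 * F (r • (ω : EuclideanSpace ℝ (Fin 3))))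
      ∂((volume : Measure (EuclideanSpace ℝ (Fin 3))).toSphere) := by
  set μ : Measure (EuclideanSpace ℝ (Fin 3)) := volume with hμ
  have hmp := μ.measurePreserving_homeomorphUnitSphereProd
  have hdim : Module.finrank ℝ (EuclideanSpace ℝ (Fin 3)) - 1 = 2 := by simp
  rw [hdim] at hmp
  set H : (Metric.sphere (0 : EuclideanSpace ℝ (Fin 3)) 1) × (Ioi (0:ℝ)) → ℝ :=
    fun x => F ((x.2 : ℝ) • (x.1 : EuclideanSpace ℝ (Fin 3))) with hH
  have hHc : ∀ x, H (homeomorphUnitSphereProd (EuclideanSpace ℝ (Fin 3)) x) = F x := by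
    intro x
    have := (homeomorphUnitSphereProd (EuclideanSpace ℝ (Fin 3))).symm_apply_apply x
    simp only [hH]
    rw [← homeomorphUnitSphereProd_symm_apply_coe, this]
  have hFc : Integrable (fun x : ({0}ᶜ : Set (EuclideanSpace ℝ (Fin 3))) => F x) (μ.comap (↑)) := by
    have : IntegrableOn F ({0}ᶜ) μ := hF.integrableOn
    rwa [integrableOn_iff_comap_subtypeVal (measurableSet_singleton _).compl] at this
  have hHi : Integrable H (μ.toSphere.prod (.volumeIoiPow 2)) := by
    rw [← hmp.integrable_comp_emb (Homeomorph.measurableEmbedding _)]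
    refine hFc.congr (Eventually.of_forall fun x => ?_)
    exact (hHc x).symm
  have hconv : ∀ G : ℝ → ℝ, (Integrable (fun r : Ioi (0:ℝ) => G r) (.volumeIoiPow 2) →
      IntegrableOn (fun r => r ^ 2 * G r) (Ioi 0)) ∧
      ∫ r : Ioi (0:ℝ), G r ∂(.volumeIoiPow 2) = ∫ r in Ioi (0:ℝ), r ^ 2 * G r := by
    intro G
    constructor
    · intro hG
      rw [Measure.volumeIoiPow, integrable_withDensity_iff_integrable_smul' (by fun_prop) (by simp)] at hG
      rw [integrableOn_iff_comap_subtypeVal measurableSet_Ioi]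
      refine hG.congr (Eventually.of_forall fun r => ?_)
      have : (0:ℝ) ≤ (r:ℝ) ^ 2 := by positivity
      simp [ENNReal.toReal_ofReal this]
    · simp only [Measure.volumeIoiPow, ENNReal.ofReal]
      rw [integral_withDensity_eq_integral_smul,
        integral_subtype_comap measurableSet_Ioi fun a ↦ Real.toNNReal (a ^ 2) • G a,
        setIntegral_congr_fun measurableSet_Ioi fun x hx ↦ ?_]
      · rw [NNReal.smul_def, Real.coe_toNNReal _ (pow_nonneg hx.out.le _), smul_eq_mul]
      · exact (measurable_subtype_coe.pow_const _).real_toNNReal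
  constructor
  · filter_upwards [hHi.prod_right_ae] with ω hω
    exact (hconv (fun r => F (r • (ω : EuclideanSpace ℝ (Fin 3))))).1 hω
  · calc ∫ u, F u ∂μ = ∫ x : ({(0)}ᶜ : Set (EuclideanSpace ℝ (Fin 3))), F x.1 ∂(μ.comap (↑)) := by
          rw [integral_subtype_comap (measurableSet_singleton _).compl fun x ↦ F x,
            restrict_compl_singleton]
      _ = ∫ x, H x ∂(μ.toSphere.prod (.volumeIoiPow 2)) := by
          rw [← hmp.integral_comp (Homeomorph.measurableEmbedding _) H]
          simp only [hHc]
      _ = _ := by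
          rw [integral_prod _ hHi]
          refine integral_congr_ae (Eventually.of_forall fun ω => ?_)
          exact (hconv (fun r => F (r • (ω : EuclideanSpace ℝ (Fin 3))))).2

end ray
section pairing
open MeasureTheory Set Filter Topology

/-- Surface measure on the unit sphere. -/
noncomputable abbrev sph : Measure (Metric.sphere (0 : EuclideanSpace ℝ (Fin 3)) 1) :=
  (volume : Measure (EuclideanSpace ℝ (Fin 3))).toSphere

lemma sph_univ : sph.real univ = 4 * Real.pi := by
  rw [Measure.toSphere_real_apply_univ, measureReal_def, EuclideanSpace.volume_ball_fin_three]
  have : (0:ℝ) ≤ Real.pi * 4 / 3 := by have := Real.pi_pos; positivity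
  simp
  rw [ENNReal.toReal_ofReal (by have := Real.pi_pos; positivity)]
  ring

lemma fld_meas (p : EuclideanSpace ℝ (Fin 3)) (a : ℝ) : Measurable (fld p a) := by
  unfold fld
  refine Measurable.ite ?_ (by fun_prop) measurable_const
  exact measurableSet_lt measurable_const (by fun_prop)

lemma fld_norm (p : EuclideanSpace ℝ (Fin 3)) (a : ℝ) (ha : 0 < a) (u : EuclideanSpace ℝ (Fin 3)) :
    ‖fld p a u‖ ≤ ((1 + ‖p‖) / a + 1) ^ 2 / (1 + ‖u‖) ^ 2 := by
  unfold fld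
  split_ifs with h
  · have hpos : 0 < ‖u - p‖ := ha.trans h
    have e : ‖(‖u - p‖ ^ 3)⁻¹ • (u - p)‖ = 1 / ‖u - p‖ ^ 2 := by
      rw [norm_smul, norm_inv, norm_pow, norm_norm]
      field_simp
    rw [e, ← one_div_pow]
    rw [← div_pow]
    refine pow_le_pow_left₀ (by positivity) ?_ 2
    rw [div_le_div_iff₀ hpos (by positivity)]
    have h1 : ‖u‖ ≤ ‖u - p‖ + ‖p‖ := by
      have := norm_add_le (u - p) p; simpa using this
    have h2 : (1 + ‖p‖) ≤ (1 + ‖p‖) / a * ‖u - p‖ := by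
      rw [div_mul_eq_mul_div, le_div_iff₀ ha]
      gcongr
    linarith
  · simp only [norm_zero]; positivity

lemma fld_memLp (p : EuclideanSpace ℝ (Fin 3)) (a : ℝ) (ha : 0 < a) :
    MemLp (fld p a) 2 (volume : Measure (EuclideanSpace ℝ (Fin 3))) := by
  rw [memLp_two_iff_integrable_sq_norm (fld_meas p a).aestronglyMeasurable]
  have h := (integrable_one_add_norm (E := EuclideanSpace ℝ (Fin 3)) (μ := volume) (r := 4)
    (by simp; norm_num)).const_mul ((((1 + ‖p‖) / a + 1) ^ 2) ^ 2)
  refine h.mono' ((fld_meas p a).norm.pow_const 2).aestronglyMeasurable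
    (Eventually.of_forall fun u => ?_)
  rw [norm_pow, norm_norm]
  refine (pow_le_pow_left₀ (norm_nonneg _) (fld_norm p a ha u) 2).trans (le_of_eq ?_)
  rw [Real.rpow_neg (by positivity)]
  have : (1 + ‖u‖) ^ (4:ℝ) = (1 + ‖u‖) ^ (4:ℕ) := by
    rw [← Real.rpow_natCast]; norm_num
  rw [this]
  field_simp

/-- Field of the nearest charge. -/
noncomputable def nfld {ι : Type*} (q : ι → EuclideanSpace ℝ (Fin 3)) (b : ℝ)
    (sel : EuclideanSpace ℝ (Fin 3) → ι) (u : EuclideanSpace ℝ (Fin 3)) :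
    EuclideanSpace ℝ (Fin 3) := fld (q (sel u)) b u

lemma nfld_eq {ι : Type*} [Fintype ι] (q : ι → EuclideanSpace ℝ (Fin 3)) (b : ℝ)
    (sel : EuclideanSpace ℝ (Fin 3) → ι) (u : EuclideanSpace ℝ (Fin 3)) :
    nfld q b sel u = ∑ k, ({u | sel u = k}).indicator (fld (q k) b) u := by
  classical
  rw [Finset.sum_eq_single (sel u)]
  · simp [nfld]
  · intro k _ hk
    simp [Ne.symm hk]
  · simp

lemma nfld_memLp {ι : Type*} [Fintype ι] (q : ι → EuclideanSpace ℝ (Fin 3)) (b : ℝ) (hb : 0 < b)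
    (sel : EuclideanSpace ℝ (Fin 3) → ι) (hm : ∀ k, MeasurableSet {u | sel u = k}) :
    MemLp (nfld q b sel) 2 (volume : Measure (EuclideanSpace ℝ (Fin 3))) := by
  have : nfld q b sel = fun u => ∑ k, ({u | sel u = k}).indicator (fld (q k) b) u := by
    funext u; exact nfld_eq q b sel u
  rw [this]
  exact memLp_finsetSum _ fun k _ => (fld_memLp (q k) b hb).indicator (hm k)

lemma inner_int {V W : EuclideanSpace ℝ (Fin 3) → EuclideanSpace ℝ (Fin 3)}
    (hV : MemLp V 2 (volume : Measure (EuclideanSpace ℝ (Fin 3)))) (hW : MemLp W 2 (volume : Measure (EuclideanSpace ℝ (Fin 3)))) :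
    Integrable (fun u => inner ℝ (V u) (W u)) := by
  refine (L2.integrable_inner (𝕜 := ℝ) (hV.toLp V) (hW.toLp W)).congr ?_
  filter_upwards [hV.coeFn_toLp, hW.coeFn_toLp] with u h1 h2
  rw [h1, h2]

lemma inner_toLp {V W : EuclideanSpace ℝ (Fin 3) → EuclideanSpace ℝ (Fin 3)}
    (hV : MemLp V 2 (volume : Measure (EuclideanSpace ℝ (Fin 3)))) (hW : MemLp W 2 (volume : Measure (EuclideanSpace ℝ (Fin 3)))) :
    inner ℝ (hV.toLp V) (hW.toLp W) = ∫ u, inner ℝ (V u) (W u) := by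
  rw [L2.inner_def]
  refine integral_congr_ae ?_
  filter_upwards [hV.coeFn_toLp, hW.coeFn_toLp] with u h1 h2
  rw [h1, h2]

lemma pairing {ι : Type*} [Fintype ι] (q : ι → EuclideanSpace ℝ (Fin 3))
    (sel : EuclideanSpace ℝ (Fin 3) → ι) (hsel : ∀ u l, ‖u - q (sel u)‖ ≤ ‖u - q l‖)
    (hm : ∀ k, MeasurableSet {u | sel u = k})
    (p : EuclideanSpace ℝ (Fin 3)) (a b : ℝ) (ha : 0 < a) (hb : 0 < b) :
    ∫ u, inner ℝ (fld p a u) (nfld q b sel u) =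
      ∫ ω, pot (q (sel (p + a • (ω : EuclideanSpace ℝ (Fin 3))))) b (p + a • (ω : EuclideanSpace ℝ (Fin 3))) ∂sph := by
  have hi := inner_int (fld_memLp p a ha) (nfld_memLp q b hb sel hm)
  rw [← integral_add_left_eq_self _ p]
  obtain ⟨h1, h2⟩ := polar _ (hi.comp_add_left p)
  rw [h2]
  refine integral_congr_ae ?_
  filter_upwards [h1] with ω hω
  have hn : ‖(ω : EuclideanSpace ℝ (Fin 3))‖ = 1 := by simp
  have e : ∀ r ∈ Ioi (0:ℝ), r ^ 2 * inner ℝ (fld p a (p + r • (ω : EuclideanSpace ℝ (Fin 3))))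
      (nfld q b sel (p + r • (ω : EuclideanSpace ℝ (Fin 3)))) = (Ioi a).indicator (fun r =>
        inner ℝ (ω : EuclideanSpace ℝ (Fin 3)) (nfld q b sel (p + r • (ω : EuclideanSpace ℝ (Fin 3))))) r := by
    intro r hr
    have hr0 : (0:ℝ) < r := hr
    unfold fld
    have h3 : ‖p + r • (ω : EuclideanSpace ℝ (Fin 3)) - p‖ = r := by
      rw [add_sub_cancel_left, norm_smul, hn, mul_one, Real.norm_of_nonneg hr0.le]
    rw [h3]
    by_cases hra : a < r
    · rw [if_pos hra, indicator_of_mem (by exact hra), add_sub_cancel_left, inner_smul_left, inner_smul_left]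
      simp only [RCLike.conj_to_real]
      field_simp
    · rw [if_neg hra, indicator_of_notMem (by exact hra)]
      simp
  have hs : Ioi (0:ℝ) ∩ Ioi a = Ioi a := by
    rw [Ioi_inter_Ioi, sup_of_le_right ha.le]
  rw [setIntegral_congr_fun measurableSet_Ioi e, setIntegral_indicator measurableSet_Ioi, hs]
  refine ray_integral q sel hsel p _ hn a b hb ?_
  have h4 := (integrableOn_congr_fun e measurableSet_Ioi).1 hω
  rw [IntegrableOn, integrable_indicator_iff measurableSet_Ioi, IntegrableOn, Measure.restrict_restrict measurableSet_Ioi, inter_comm, hs] at h4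
  exact h4

lemma pairing1 (p q : EuclideanSpace ℝ (Fin 3)) (a b : ℝ) (ha : 0 < a) (hb : 0 < b) :
    ∫ u, inner ℝ (fld p a u) (fld q b u) =
      ∫ ω, pot q b (p + a • (ω : EuclideanSpace ℝ (Fin 3))) ∂sph :=
  pairing (ι := Unit) (fun _ => q) (fun _ => ()) (by simp) (by simp) p a b ha hb

lemma sph_le (f : Metric.sphere (0 : EuclideanSpace ℝ (Fin 3)) 1 → ℝ) (c : ℝ) (hc : 0 ≤ c) (hf : ∀ ω, f ω ≤ c) :
    ∫ ω, f ω ∂sph ≤ 4 * Real.pi * c := by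
  by_cases hi : Integrable f sph
  · have := integral_mono hi (integrable_const c) hf
    rwa [integral_const, sph_univ, smul_eq_mul] at this
  · rw [integral_undef hi]; have := Real.pi_pos; positivity

lemma pot_le (p : EuclideanSpace ℝ (Fin 3)) (a : ℝ) (u : EuclideanSpace ℝ (Fin 3)) (c : ℝ) (hc : 0 < c)
   (h : c ≤ max ‖u - p‖ a) : pot p a u ≤ c⁻¹ := by
  unfold pot; gcongr

lemma pot_int (p q : EuclideanSpace ℝ (Fin 3)) (a b : ℝ) (hb : 0 < b) :
    Integrable (fun ω : Metric.sphere (0 : EuclideanSpace ℝ (Fin 3)) 1 =>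
      pot q b (p + a • (ω : EuclideanSpace ℝ (Fin 3)))) sph := by
  refine (integrable_const (b⁻¹)).mono' ?_ (Eventually.of_forall fun ω => ?_)
  · refine Measurable.aestronglyMeasurable ?_
    unfold pot; fun_prop
  · have : 0 ≤ pot q b (p + a • (ω : EuclideanSpace ℝ (Fin 3))) := by unfold pot; positivity
    rw [Real.norm_of_nonneg this]
    exact pot_le _ _ _ _ hb (le_max_right _ _)

lemma pair_self (p : EuclideanSpace ℝ (Fin 3)) (a : ℝ) (ha : 0 < a) :
    ∫ u, inner ℝ (fld p a u) (fld p a u) = 4 * Real.pi / a := by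
  rw [pairing1 p p a a ha ha]
  have : ∀ ω : Metric.sphere (0 : EuclideanSpace ℝ (Fin 3)) 1, pot p a (p + a • (ω : EuclideanSpace ℝ (Fin 3))) = a⁻¹ := by
    intro ω
    simp [pot, norm_smul, abs_of_pos ha]
  simp only [this]
  rw [integral_const, sph_univ, smul_eq_mul]
  rfl

lemma fpair_comm (p q : EuclideanSpace ℝ (Fin 3)) (a b : ℝ) :
    ∫ u, inner ℝ (fld p a u) (fld q b u) = ∫ u, inner ℝ (fld q b u) (fld p a u) := by
  simp only [real_inner_comm]

lemma sphere_pt (p q ω : EuclideanSpace ℝ (Fin 3)) (hω : ‖ω‖ = 1) (a : ℝ) (ha : 0 < a) :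
    ‖p - q‖ - a ≤ ‖p + a • ω - q‖ ∧ ‖p + a • ω - q‖ ≤ ‖p - q‖ + a := by
  have h1 : ‖a • ω‖ = a := by rw [norm_smul, hω, mul_one, Real.norm_of_nonneg ha.le]
  have h2 : p + a • ω - q = (p - q) + a • ω := by abel
  rw [h2]
  constructor
  · have := norm_sub_le ((p - q) + a • ω) (a • ω)
    rw [add_sub_cancel_right] at this; linarith
  · have := norm_add_le (p - q) (a • ω); linarith

lemma pair_le (p q : EuclideanSpace ℝ (Fin 3)) (hpq : p ≠ q) (a b : ℝ) (ha : 0 < a) (hb : 0 < b) :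
    ∫ u, inner ℝ (fld p a u) (fld q b u) ≤ 4 * Real.pi / ‖p - q‖ := by
  have hd : 0 < ‖p - q‖ := norm_pos_iff.2 (sub_ne_zero.2 hpq)
  have key : ∀ b' ∈ Ioo 0 (min b ‖p - q‖),
      ∫ u, inner ℝ (fld p a u) (fld q b u) ≤ 4 * Real.pi * (‖p - q‖ - b')⁻¹ := by
    rintro b' ⟨h0, h1⟩
    have hbb : b' < b := h1.trans_le (min_le_left _ _)
    have hbd : b' < ‖p - q‖ := h1.trans_le (min_le_right _ _)
    calc _ = _ := pairing1 p q a b ha hb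
      _ ≤ ∫ ω, pot q b' (p + a • (ω : EuclideanSpace ℝ (Fin 3))) ∂sph := by
        refine integral_mono (pot_int _ _ _ _ hb) (pot_int _ _ _ _ h0) fun ω => ?_
        unfold pot
        have : 0 < max ‖p + a • (ω : EuclideanSpace ℝ (Fin 3)) - q‖ b' := lt_max_of_lt_right h0
        simp only
        gcongr
      _ = ∫ u, inner ℝ (fld p a u) (fld q b' u) := (pairing1 p q a b' ha h0).symm
      _ = ∫ ω, pot p a (q + b' • (ω : EuclideanSpace ℝ (Fin 3))) ∂sph := by
        rw [fpair_comm, pairing1 q p b' a h0 ha]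
      _ ≤ _ := by
        refine sph_le _ _ (inv_nonneg.2 (by linarith)) fun ω => ?_
        refine pot_le _ _ _ _ (by linarith) (le_max_of_le_left ?_)
        rw [norm_sub_rev p q]
        exact (sphere_pt q p ω (by simp) b' h0).1
  have ht : Tendsto (fun b' : ℝ => 4 * Real.pi * (‖p - q‖ - b')⁻¹) (𝓝[>] 0) (𝓝 (4 * Real.pi * (‖p - q‖ - 0)⁻¹)) := by
    refine Tendsto.mono_left ?_ nhdsWithin_le_nhds
    refine ContinuousAt.tendsto (f := fun b' : ℝ => 4 * Real.pi * (‖p - q‖ - b')⁻¹) ?_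
    refine continuousAt_const.mul (ContinuousAt.inv₀ (by fun_prop) (by simpa using hd.ne'))
  rw [sub_zero] at ht
  refine ge_of_tendsto ht ?_
  filter_upwards [Ioo_mem_nhdsGT (lt_min hb hd)] with b' hb' using key b' hb'

lemma pair_eq (p q : EuclideanSpace ℝ (Fin 3)) (a b : ℝ) (ha : 0 < a) (hb : 0 < b)
    (hab : a + b ≤ ‖p - q‖) :
    ∫ u, inner ℝ (fld p a u) (fld q b u) = 4 * Real.pi / ‖p - q‖ := by
  have hd : 0 < ‖p - q‖ := by linarith
  refine le_antisymm (pair_le p q (by rintro rfl; simp at hd) a b ha hb) ?_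
  have key : ∀ b' ∈ Ioo 0 b, 4 * Real.pi * (‖p - q‖ + b')⁻¹ ≤
      ∫ u, inner ℝ (fld p a u) (fld q b u) := by
    rintro b' ⟨h0, h1⟩
    have e : ∫ u, inner ℝ (fld p a u) (fld q b u) = ∫ ω, pot p a (q + b' • (ω : EuclideanSpace ℝ (Fin 3))) ∂sph := by
      rw [← pairing1 q p b' a h0 ha, fpair_comm q p, pairing1 p q a b' ha h0, pairing1 p q a b ha hb]
      refine integral_congr_ae (Eventually.of_forall fun ω => ?_)
      have := (sphere_pt p q ω (by simp) a ha).1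
      simp only [pot]
      rw [max_eq_left (by linarith), max_eq_left (by linarith)]
    rw [e, ← sph_univ, ← smul_eq_mul, ← integral_const]
    refine integral_mono (integrable_const _) (pot_int _ _ _ _ ha) fun ω => ?_
    have h := sphere_pt q p ω (by simp) b' h0
    rw [norm_sub_rev q p] at h
    simp only [pot]
    have : 0 < max ‖q + b' • (ω : EuclideanSpace ℝ (Fin 3)) - p‖ a := lt_max_of_lt_right ha
    gcongr
    exact max_le h.2 (by linarith)
  have ht : Tendsto (fun b' : ℝ => 4 * Real.pi * (‖p - q‖ + b')⁻¹) (𝓝[>] 0) (𝓝 (4 * Real.pi * (‖p - q‖ + 0)⁻¹)) := by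
    refine Tendsto.mono_left ?_ nhdsWithin_le_nhds
    refine ContinuousAt.tendsto (f := fun b' : ℝ => 4 * Real.pi * (‖p - q‖ + b')⁻¹) ?_
    refine continuousAt_const.mul (ContinuousAt.inv₀ (by fun_prop) (by simpa using hd.ne'))
  rw [add_zero] at ht
  refine le_of_tendsto ht ?_
  filter_upwards [Ioo_mem_nhdsGT hb] with b' hb' using key b' hb'

end pairing

section main
open MeasureTheory Set Filter Topology

lemma fld_refl (p q : EuclideanSpace ℝ (Fin 3)) (a : ℝ) (u : EuclideanSpace ℝ (Fin 3)) :
    fld p a (p + q - u) = - fld q a u := by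
  unfold fld
  have h : p + q - u - p = -(u - q) := by abel
  rw [h, norm_neg]
  split_ifs
  · rw [smul_neg]
  · simp

lemma two_point (p q : EuclideanSpace ℝ (Fin 3)) (a : ℝ) (ha : 0 < a)
    (hab : a + a ≤ ‖p - q‖) :
    ∫ u in {u | ‖u - p‖ ≤ ‖u - q‖}, inner ℝ (fld p a u) (fld p a u) ≤
      4 * Real.pi / a - 2 * Real.pi / ‖p - q‖ := by
  classical
  have hd : 0 < ‖p - q‖ := by linarith
  have hpq : p ≠ q := by rintro rfl; simp at hd
  set A : Set (EuclideanSpace ℝ (Fin 3)) := {u | ‖u - p‖ ≤ ‖u - q‖} with hA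
  have hAm : MeasurableSet A := measurableSet_le (by fun_prop) (by fun_prop)
  set Q : Bool → EuclideanSpace ℝ (Fin 3) := fun b => if b then p else q with hQ
  set sel : EuclideanSpace ℝ (Fin 3) → Bool := fun u => decide (u ∈ A) with hsel
  have hs1 : ∀ u l, ‖u - Q (sel u)‖ ≤ ‖u - Q l‖ := by
    intro u l
    by_cases h : u ∈ A
    · have h' : ‖u - p‖ ≤ ‖u - q‖ := h
      cases l <;> simp [hsel, hQ, h, h']
    · have h' : ‖u - q‖ ≤ ‖u - p‖ := (not_le.1 h).le
      cases l <;> simp [hsel, hQ, h, h']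
  have hs2 : ∀ k, MeasurableSet {u | sel u = k} := by
    intro k
    cases k
    · have : {u | sel u = false} = Aᶜ := by ext u; simp [hsel]
      rw [this]; exact hAm.compl
    · have : {u | sel u = true} = A := by ext u; simp [hsel]
      rw [this]; exact hAm
  have h1 := pairing Q sel hs1 hs2 p a a ha ha
  have h2 : ∀ ω : Metric.sphere (0 : EuclideanSpace ℝ (Fin 3)) 1,
      pot (Q (sel (p + a • (ω : EuclideanSpace ℝ (Fin 3))))) a (p + a • (ω : EuclideanSpace ℝ (Fin 3))) = a⁻¹ := by
    intro ω
    have := hs1 (p + a • (ω : EuclideanSpace ℝ (Fin 3))) true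
    have e : ‖p + a • (ω : EuclideanSpace ℝ (Fin 3)) - Q true‖ = a := by
      simp [hQ, norm_smul, abs_of_pos ha]
    rw [e] at this
    unfold pot
    rw [max_eq_right this]
  simp only [h2] at h1
  rw [integral_const, sph_univ, smul_eq_mul] at h1
  have hi := inner_int (fld_memLp p a ha) (nfld_memLp Q a ha sel hs2)
  have hh := inner_int (fld_memLp p a ha) (fld_memLp q a ha)
  rw [← integral_add_compl hAm hi] at h1
  have e1 : ∫ u in A, inner ℝ (fld p a u) (nfld Q a sel u) = ∫ u in A, inner ℝ (fld p a u) (fld p a u) := by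
    refine setIntegral_congr_fun hAm fun u hu => ?_
    simp [nfld, hsel, hQ, hu]
  have e2 : ∫ u in Aᶜ, inner ℝ (fld p a u) (nfld Q a sel u) = ∫ u in Aᶜ, inner ℝ (fld p a u) (fld q a u) := by
    refine setIntegral_congr_fun hAm.compl fun u hu => ?_
    have hu' : u ∉ A := hu
    simp [nfld, hsel, hQ, hu']
  rw [e1, e2] at h1
  have e3 : ∫ u in Aᶜ, inner ℝ (fld p a u) (fld q a u) = ∫ u in A, inner ℝ (fld p a u) (fld q a u) := by
    rw [← integral_indicator hAm.compl, ← integral_indicator hAm, ← integral_sub_left_eq_self _ volume (p + q)]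
    refine integral_congr_ae ?_
    have hnull : (volume : Measure (EuclideanSpace ℝ (Fin 3))) (AffineSubspace.perpBisector p q : Set (EuclideanSpace ℝ (Fin 3))) = 0 :=
      Measure.addHaar_affineSubspace _ _ (by simpa using hpq)
    filter_upwards [compl_mem_ae_iff.2 hnull] with u hu
    have hu' : ‖u - p‖ ≠ ‖u - q‖ := by
      intro h; apply hu
      simp only [SetLike.mem_coe]
      rw [AffineSubspace.mem_perpBisector_iff_dist_eq, dist_eq_norm, dist_eq_norm, h]
    have n1 : ‖p + q - u - p‖ = ‖u - q‖ := by rw [← norm_neg]; congr 1; abel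
    have n2 : ‖p + q - u - q‖ = ‖u - p‖ := by rw [← norm_neg]; congr 1; abel
    by_cases h : u ∈ A
    · have h' : p + q - u ∈ Aᶜ := by
        simp only [hA, mem_compl_iff, mem_ofPred_eq, n1, n2, not_le]
        exact lt_of_le_of_ne h hu'
      rw [indicator_of_mem h, indicator_of_mem h', fld_refl p q, add_comm p q, fld_refl q p, inner_neg_neg, real_inner_comm]
    · have h' : p + q - u ∉ Aᶜ := by
        simp only [hA, mem_compl_iff, mem_ofPred_eq, n1, n2, not_not]
        exact (not_le.1 h).le
      rw [indicator_of_notMem h, indicator_of_notMem h']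
  have e4 := integral_add_compl hAm hh
  rw [pair_eq p q a a ha ha hab, e3] at e4
  rw [e3] at h1
  have e5 : 4 * Real.pi / ‖p - q‖ = 2 * (2 * Real.pi / ‖p - q‖) := by ring
  rw [e5] at e4
  rw [div_eq_mul_inv (4 * Real.pi) a]
  linarith

lemma exists_sel {K : ℕ} (hK : 0 < K) (R : Fin K → EuclideanSpace ℝ (Fin 3)) :
    ∃ sel : EuclideanSpace ℝ (Fin 3) → Fin K, (∀ u l, ‖u - R (sel u)‖ ≤ ‖u - R l‖) ∧
      ∀ k, MeasurableSet {u | sel u = k} := by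
  have : Nonempty (Fin K) := ⟨⟨0, hK⟩⟩
  have hex : ∀ u, ∃ k, (∀ l, ‖u - R k‖ ≤ ‖u - R l‖) ∧ ∀ j, j < k → ¬ (∀ l, ‖u - R j‖ ≤ ‖u - R l‖) := by
    intro u
    obtain ⟨k0, hk0⟩ := Finite.exists_min (fun k => ‖u - R k‖)
    obtain ⟨k, hk, hmin⟩ := WellFounded.has_min (wellFounded_lt (α := Fin K))
      {k | ∀ l, ‖u - R k‖ ≤ ‖u - R l‖} ⟨k0, hk0⟩
    exact ⟨k, hk, fun j hj h => hmin j h hj⟩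
  choose sel h1 h2 using hex
  refine ⟨sel, h1, fun k => ?_⟩
  have hm : ∀ k, MeasurableSet {u | ∀ l, ‖u - R k‖ ≤ ‖u - R l‖} := by
    intro k
    have : {u | ∀ l, ‖u - R k‖ ≤ ‖u - R l‖} = ⋂ l, {u | ‖u - R k‖ ≤ ‖u - R l‖} := by
      ext u; simp
    rw [this]
    exact MeasurableSet.iInter fun l => measurableSet_le (by fun_prop) (by fun_prop)
  have e : {u | sel u = k} = {u | ∀ l, ‖u - R k‖ ≤ ‖u - R l‖} ∩ ⋂ j, ⋂ (_ : j < k), {u | ∀ l, ‖u - R j‖ ≤ ‖u - R l‖}ᶜ := by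
    ext u
    simp only [mem_ofPred_eq, mem_inter_iff, mem_iInter, mem_compl_iff]
    constructor
    · rintro rfl; exact ⟨h1 u, h2 u⟩
    · rintro ⟨g1, g2⟩
      rcases lt_trichotomy (sel u) k with h | h | h
      · exact absurd (h1 u) (g2 _ h)
      · exact h
      · exact absurd g1 (h2 u _ h)
  rw [e]
  exact (hm k).inter (MeasurableSet.iInter fun j => MeasurableSet.iInter fun _ => (hm j).compl)

lemma nnd_mem {K : ℕ} (R : Fin K → EuclideanSpace ℝ (Fin 3)) (y : EuclideanSpace ℝ (Fin 3))
    (h : ∃ k, R k ≠ y) : ∃ k, R k ≠ y ∧ nearestNucleusDist R y = ‖y - R k‖ := by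
  have hf : {d : ℝ | ∃ k : Fin K, R k ≠ y ∧ d = ‖y - R k‖}.Finite := by
    refine (Set.finite_range fun k => ‖y - R k‖).subset ?_
    rintro d ⟨k, _, rfl⟩; exact ⟨k, rfl⟩
  obtain ⟨k, hk⟩ := h
  have hne : {d : ℝ | ∃ k : Fin K, R k ≠ y ∧ d = ‖y - R k‖}.Nonempty := ⟨‖y - R k‖, k, hk, rfl⟩
  exact hne.csInf_mem hf

lemma nnd_le {K : ℕ} (R : Fin K → EuclideanSpace ℝ (Fin 3)) (y : EuclideanSpace ℝ (Fin 3))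
    (k : Fin K) (h : R k ≠ y) : nearestNucleusDist R y ≤ ‖y - R k‖ := by
  refine csInf_le ⟨0, ?_⟩ ⟨k, h, rfl⟩
  rintro d ⟨k, _, rfl⟩; exact norm_nonneg _

lemma nfld_self {K : ℕ} (R : Fin K → EuclideanSpace ℝ (Fin 3)) (a : ℝ) (ha : 0 < a)
    (hR : ∀ k, ∃ l, R l ≠ R k)
    (ha2 : ∀ k, a + a ≤ nearestNucleusDist R (R k))
    (sel : EuclideanSpace ℝ (Fin 3) → Fin K) (hs1 : ∀ u l, ‖u - R (sel u)‖ ≤ ‖u - R l‖)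
    (hs2 : ∀ k, MeasurableSet {u | sel u = k}) :
    ∫ u, inner ℝ (nfld R a sel u) (nfld R a sel u) ≤
      ∑ k, (4 * Real.pi / a - 2 * Real.pi / nearestNucleusDist R (R k)) := by
  have e : ∀ u, inner ℝ (nfld R a sel u) (nfld R a sel u) =
      ∑ k, ({u | sel u = k}).indicator (fun u => inner ℝ (fld (R k) a u) (fld (R k) a u)) u := by
    intro u
    rw [Finset.sum_eq_single (sel u)]
    · simp [nfld]
    · intro k _ hk
      simp [Ne.symm hk]
    · simp
  simp only [e]
  have hi : ∀ k, Integrable (fun u => inner ℝ (fld (R k) a u) (fld (R k) a u)) :=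
    fun k => inner_int (fld_memLp _ a ha) (fld_memLp _ a ha)
  rw [integral_finsetSum _ fun k _ => (hi k).indicator (hs2 k)]
  refine Finset.sum_le_sum fun k _ => ?_
  rw [integral_indicator (hs2 k)]
  obtain ⟨l, hl, hl2⟩ := nnd_mem R (R k) (hR k)
  rw [hl2]
  refine le_trans ?_ (two_point (R k) (R l) a ha (by rw [← hl2]; exact ha2 k))
  refine setIntegral_mono_set (hi k).integrableOn (Eventually.of_forall fun u => real_inner_self_nonneg) ?_
  refine Eventually.of_forall fun u hu => ?_
  have hu' : sel u = k := hu
  have := hs1 u l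
  rw [hu'] at this
  exact this

lemma hilbert_expand {H : Type*} [NormedAddCommGroup H] [InnerProductSpace ℝ H] {N K : ℕ}
    (v : Fin N → H) (w : Fin K → H) (n : H) (z : ℝ) :
    0 ≤ (∑ i, ∑ j, inner ℝ (v i) (v j)) - 2 * z * (∑ i, ∑ k, inner ℝ (v i) (w k))
      + 2 * z * (∑ i, inner ℝ (v i) n)
      + z ^ 2 * ((∑ k, ∑ l, inner ℝ (w k) (w l)) - 2 * (∑ k, inner ℝ (w k) n) + inner ℝ n n) := by
  have h : 0 ≤ inner ℝ ((∑ i, v i) - z • (∑ k, w k) + z • n) ((∑ i, v i) - z • (∑ k, w k) + z • n) :=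
    real_inner_self_nonneg
  have e1 : inner ℝ (∑ i, v i) (∑ i, v i) = ∑ i, ∑ j, inner ℝ (v i) (v j) := by
    rw [sum_inner]; simp only [inner_sum]
  have e2 : inner ℝ (∑ i, v i) (∑ k, w k) = ∑ i, ∑ k, inner ℝ (v i) (w k) := by
    rw [sum_inner]; simp only [inner_sum]
  have e3 : inner ℝ (∑ i, v i) n = ∑ i, inner ℝ (v i) n := by
    simp only [sum_inner]
  have e4 : inner ℝ (∑ i, w i) (∑ i, w i) = ∑ i, ∑ j, inner ℝ (w i) (w j) := by
    rw [sum_inner]; simp only [inner_sum]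
  have e5 : inner ℝ (∑ i, w i) n = ∑ i, inner ℝ (w i) n := by
    simp only [sum_inner]
  rw [← e1, ← e2, ← e3, ← e4, ← e5]
  generalize (∑ i, v i) = V at *
  generalize (∑ i, w i) = W at *
  simp only [inner_add_left, inner_add_right, inner_sub_left, inner_sub_right, inner_smul_left, inner_smul_right, RCLike.conj_to_real] at h
  rw [real_inner_comm V W, real_inner_comm V n, real_inner_comm W n] at h
  linarith

end main

/-- The Lieb–Yau inequality. -/
theorem lieb_yau_inequality (z : ℝ) (hz : 0 < z) (N K : ℕ) (hK : 2 ≤ K)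
    (x : Fin N → EuclideanSpace ℝ (Fin 3)) (R : Fin K → EuclideanSpace ℝ (Fin 3))
    (hx : Function.Injective x) (hR : Function.Injective R)
    (hxR : ∀ (i : Fin N) (k : Fin K), x i ≠ R k) :
    (1 / 2) * (∑ i : Fin N, ∑ j ∈ univ \ {i}, 1 / ‖x i - x j‖)
        - (∑ i : Fin N, ∑ k : Fin K, z / ‖x i - R k‖)
        + (1 / 2) * (∑ k : Fin K, ∑ k' ∈ univ \ {k}, z ^ 2 / ‖R k - R k'‖)
      ≥ - (∑ i : Fin N, (z + Real.sqrt (2 * z) + 1 / 2) / nearestNucleusDist R (x i))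
        + (z ^ 2 / 4) * ∑ k : Fin K, 1 / nearestNucleusDist R (R k) := by
  have hpi := Real.pi_pos
  have hRex : ∀ k, ∃ l, R l ≠ R k := by
    intro k
    have : Nontrivial (Fin K) := Fin.nontrivial_iff_two_le.2 hK
    obtain ⟨l, hl⟩ := exists_ne k
    exact ⟨l, fun h => hl (hR h)⟩
  have hδx : ∀ i, 0 < nearestNucleusDist R (x i) := by
    intro i
    obtain ⟨k, h1, h2⟩ := nnd_mem R (x i) ⟨⟨0, by omega⟩, (hxR i _).symm⟩
    rw [h2]; exact norm_pos_iff.2 (sub_ne_zero.2 h1.symm)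
  have hδR : ∀ k, 0 < nearestNucleusDist R (R k) := by
    intro k
    obtain ⟨k, h1, h2⟩ := nnd_mem R (R k) (hRex k)
    rw [h2]; exact norm_pos_iff.2 (sub_ne_zero.2 h1.symm)
  obtain ⟨sel, hs1, hs2⟩ := exists_sel (by omega : 0 < K) R
  set s := Real.sqrt (2 * z) with hs
  have hs0 : 0 < s := Real.sqrt_pos.2 (by linarith)
  have hss : s ^ 2 = 2 * z := Real.sq_sqrt (by linarith)
  set δ : Fin N → ℝ := fun i => nearestNucleusDist R (x i) with hδ
  set r : Fin N → ℝ := fun i => δ i / (1 + s) with hr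
  have hr0 : ∀ i, 0 < r i := fun i => div_pos (hδx i) (by linarith)
  have hrd : ∀ i, δ i - r i = δ i * s / (1 + s) := by
    intro i; simp only [hr]; field_simp; ring
  have hrd0 : ∀ i, 0 < δ i - r i := by
    intro i; rw [hrd]; have := hδx i; positivity
  obtain ⟨a, ha0, ha1, ha2⟩ : ∃ a : ℝ, 0 < a ∧ (∀ i, a ≤ δ i - r i) ∧
      ∀ k, a ≤ nearestNucleusDist R (R k) / 2 := by
    have h1 : ∀ᶠ a in nhdsWithin (0:ℝ) (Set.Ioi 0), ∀ i, a ≤ δ i - r i :=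
      Filter.eventually_all.2 fun i => Filter.mem_of_superset (Ioo_mem_nhdsGT (hrd0 i)) fun a h => h.2.le
    have h2 : ∀ᶠ a in nhdsWithin (0:ℝ) (Set.Ioi 0), ∀ k, a ≤ nearestNucleusDist R (R k) / 2 :=
      Filter.eventually_all.2 fun k => Filter.mem_of_superset (Ioo_mem_nhdsGT (half_pos (hδR k))) fun a h => h.2.le
    have h3 : ∀ᶠ a in nhdsWithin (0:ℝ) (Set.Ioi 0), 0 < a := self_mem_nhdsWithin
    obtain ⟨a, h⟩ := (h3.and (h1.and h2)).exists
    exact ⟨a, h.1, h.2.1, h.2.2⟩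
  have hv := fun i => fld_memLp (x i) (r i) (hr0 i)
  have hw := fun k => fld_memLp (R k) a ha0
  have hn := nfld_memLp R a ha0 sel hs2
  have main := hilbert_expand (fun i => (hv i).toLp _) (fun k => (hw k).toLp _) (hn.toLp _) z
  simp only [inner_toLp] at main
  -- bounds
  have b1 : ∑ i, ∑ j, ∫ u, inner ℝ (fld (x i) (r i) u) (fld (x j) (r j) u) ≤
      4 * Real.pi * (∑ i : Fin N, ∑ j ∈ univ \ {i}, 1 / ‖x i - x j‖) + ∑ i, 4 * Real.pi / r i := by
    rw [Finset.mul_sum, ← Finset.sum_add_distrib]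
    refine Finset.sum_le_sum fun i _ => ?_
    rw [← Finset.sum_sdiff (Finset.subset_univ {i}), Finset.sum_singleton, pair_self _ _ (hr0 i),
      Finset.mul_sum]
    gcongr with j hj
    have hij : j ≠ i := by simpa using hj
    rw [mul_one_div]
    exact pair_le _ _ (fun h => hij (hx h).symm) _ _ (hr0 i) (hr0 j)
  have b2 : ∑ i, ∑ k, ∫ u, inner ℝ (fld (x i) (r i) u) (fld (R k) a u) =
      ∑ i, ∑ k, 4 * Real.pi / ‖x i - R k‖ := by
    refine Finset.sum_congr rfl fun i _ => Finset.sum_congr rfl fun k _ => ?_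
    refine pair_eq _ _ _ _ (hr0 i) ha0 ?_
    have := nnd_le R (x i) k (hxR i k).symm
    have := ha1 i
    simp only [hδ] at this ⊢
    linarith
  have b3 : ∑ i, ∫ u, inner ℝ (fld (x i) (r i) u) (nfld R a sel u) ≤
      ∑ i, 4 * Real.pi * (δ i - r i)⁻¹ := by
    refine Finset.sum_le_sum fun i _ => ?_
    rw [pairing R sel hs1 hs2 _ _ _ (hr0 i) ha0]
    refine sph_le _ _ (inv_nonneg.2 (hrd0 i).le) fun ω => ?_
    refine pot_le _ _ _ _ (hrd0 i) (le_max_of_le_left ?_)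
    refine le_trans ?_ (sphere_pt _ _ _ (by simp) _ (hr0 i)).1
    have := nnd_le R (x i) (sel (x i + r i • (ω : EuclideanSpace ℝ (Fin 3)))) (hxR i _).symm
    simp only [hδ]
    linarith
  have b4 : ∑ k, ∑ l, ∫ u, inner ℝ (fld (R k) a u) (fld (R l) a u) =
      4 * Real.pi * (∑ k : Fin K, ∑ l ∈ univ \ {k}, 1 / ‖R k - R l‖) + ∑ k : Fin K, 4 * Real.pi / a := by
    rw [Finset.mul_sum, ← Finset.sum_add_distrib]
    refine Finset.sum_congr rfl fun i _ => ?_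
    rw [← Finset.sum_sdiff (Finset.subset_univ {i}), Finset.sum_singleton, pair_self _ _ ha0,
      Finset.mul_sum]
    congr 1
    refine Finset.sum_congr rfl fun j hj => ?_
    have hij : j ≠ i := by simpa using hj
    rw [mul_one_div]
    refine pair_eq _ _ _ _ ha0 ha0 ?_
    have := nnd_le R (R i) j (fun h => hij (hR h))
    have := ha2 i
    linarith
  have b5 : ∑ k, ∫ u, inner ℝ (fld (R k) a u) (nfld R a sel u) = ∑ k : Fin K, 4 * Real.pi / a := by
    refine Finset.sum_congr rfl fun k _ => ?_
    rw [pairing R sel hs1 hs2 _ _ _ ha0 ha0]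
    have : ∀ ω : Metric.sphere (0 : EuclideanSpace ℝ (Fin 3)) 1,
        pot (R (sel (R k + a • (ω : EuclideanSpace ℝ (Fin 3))))) a (R k + a • (ω : EuclideanSpace ℝ (Fin 3))) = a⁻¹ := by
      intro ω
      have := hs1 (R k + a • (ω : EuclideanSpace ℝ (Fin 3))) k
      have e : ‖R k + a • (ω : EuclideanSpace ℝ (Fin 3)) - R k‖ = a := by
        simp [norm_smul, abs_of_pos ha0]
      rw [e] at this
      unfold pot
      rw [max_eq_right this]
    simp only [this]
    rw [MeasureTheory.integral_const, sph_univ, smul_eq_mul]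
    rfl
  have b6 := nfld_self R a ha0 hRex (fun k => by have := ha2 k; linarith) sel hs1 hs2
  rw [Finset.sum_sub_distrib] at b6
  rw [b2, b4, b5] at main
  have c1 : ∑ k : Fin K, 2 * Real.pi / nearestNucleusDist R (R k) =
      2 * Real.pi * ∑ k : Fin K, 1 / nearestNucleusDist R (R k) := by
    rw [Finset.mul_sum]; simp only [mul_one_div]
  have c2 : ∑ i, ∑ k, 4 * Real.pi / ‖x i - R k‖ = 4 * Real.pi * ∑ i, ∑ k, 1 / ‖x i - R k‖ := by
    simp only [Finset.mul_sum, mul_one_div]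
  have c3 : (∑ i : Fin N, ∑ k : Fin K, z / ‖x i - R k‖) = z * ∑ i, ∑ k, 1 / ‖x i - R k‖ := by
    simp only [Finset.mul_sum, mul_one_div]
  have c4 : (∑ k : Fin K, ∑ k' ∈ univ \ {k}, z ^ 2 / ‖R k - R k'‖) =
      z ^ 2 * ∑ k : Fin K, ∑ k' ∈ univ \ {k}, 1 / ‖R k - R k'‖ := by
    simp only [Finset.mul_sum, mul_one_div]
  have c5 : (∑ i, 4 * Real.pi / r i) + 2 * z * ∑ i, 4 * Real.pi * (δ i - r i)⁻¹ =
      8 * Real.pi * ∑ i : Fin N, (z + s + 1 / 2) / δ i := by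
    rw [Finset.mul_sum, Finset.mul_sum, ← Finset.sum_add_distrib]
    refine Finset.sum_congr rfl fun i _ => ?_
    rw [hrd]
    have hd : 0 < δ i := hδx i
    have hz' : z = s ^ 2 / 2 := by linarith
    simp only [hr]
    rw [hz']
    field_simp
    ring
  rw [c3, c4]
  rw [c2] at main
  rw [c1] at b6
  have m1 := mul_le_mul_of_nonneg_left b3 (by linarith : 0 ≤ 2 * z)
  have m2 := mul_le_mul_of_nonneg_left b6 (sq_nonneg z)
  generalize (∑ i : Fin N, ∑ j ∈ univ \ {i}, 1 / ‖x i - x j‖) = S1 at *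
  generalize (∑ i, ∑ k, 1 / ‖x i - R k‖) = S2 at *
  generalize (∑ k : Fin K, ∑ k' ∈ univ \ {k}, 1 / ‖R k - R k'‖) = S3 at *
  generalize (∑ k : Fin K, 1 / nearestNucleusDist R (R k)) = S4 at *
  generalize (∑ k : Fin K, 4 * Real.pi / a) = S5 at *
  generalize (∑ i : Fin N, (z + s + 1 / 2) / δ i) = S6 at *
  have fin : 0 ≤ Real.pi * 8 * (1 / 2 * S1 - z * S2 + 1 / 2 * (z ^ 2 * S3) + S6 - z ^ 2 / 4 * S4) := by
    linarith
  have := nonneg_of_mul_nonneg_right fin (by positivity)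
  linarith
end

section
/- Let Δ be a fixed open simplex in ℝ³. There exists a constant C > 0 (depending only on Δ) such that for every N ∈ ℕ, every z_1, …, z_N ∈ ℝ, every pairwise distinct x_1, …, x_N ∈ ℝ³ and every ℓ > 0: Σ_{1 ≤ i < j ≤ N} z_i z_j/‖x_i − x_j‖ ≥ (1/(ℓ³·|Δ|)) · ∫_{SO(3)} ∫_{ℝ³} [ Σ_{1 ≤ i < j ≤ N} z_i z_j · 1_{R(ℓΔ)+u}(x_i) · 1_{R(ℓΔ)+u}(x_j) / ‖x_i − x_j‖ ] du dμ(R) − (C/ℓ)·Σ_{i=1}^N z_i² (Graf–Schenker inequality). -/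
open MeasureTheory Finset
open scoped ENNReal Pointwise

noncomputable instance : MeasurableSpace (Matrix (Fin 3) (Fin 3) ℝ) := borel _
instance : BorelSpace (Matrix (Fin 3) (Fin 3) ℝ) := ⟨rfl⟩
abbrev E3 := EuclideanSpace ℝ (Fin 3)

lemma exists_isometry_map (v w : E3) (h : ‖v‖ = ‖w‖) : ∃ T : E3 ≃ₗᵢ[ℝ] E3, T v = w :=
  ⟨Submodule.reflection (ℝ ∙ (v - w))ᗮ, Submodule.reflection_sub h⟩

lemma disc_volume (c : ℝ) : volume {q : Fin 2 → ℝ | q 0 ^ 2 + q 1 ^ 2 < c}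
    = ENNReal.ofReal (Real.pi * max c 0) := by
  have h : volume {q : Fin 2 → ℝ | q 0 ^ 2 + q 1 ^ 2 < c}
      = volume (Metric.ball (0 : EuclideanSpace ℝ (Fin 2)) (Real.sqrt c)) := by
    rw [← (PiLp.volume_preserving_toLp (Fin 2)).measure_preimage
      Metric.isOpen_ball.measurableSet.nullMeasurableSet]
    congr 1
    ext q
    simp only [Set.mem_ofPred_eq, Set.mem_preimage, Metric.mem_ball, dist_zero_right,
      EuclideanSpace.norm_eq, Fin.sum_univ_two, Real.norm_eq_abs, sq_abs]
    rw [Real.sqrt_lt_sqrt_iff (by positivity)]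
  rw [h, EuclideanSpace.volume_ball_fin_two]
  rw [← ENNReal.ofReal_pow (Real.sqrt_nonneg _),
    ← ENNReal.ofReal_mul (by positivity)]
  congr 1
  rcases le_total c 0 with hc | hc
  · rw [Real.sqrt_eq_zero_of_nonpos hc, max_eq_right hc]; simp
  · rw [Real.sq_sqrt hc, max_eq_left hc]; simp [mul_comm]

lemma lens_integral (h d : ℝ) (hd : 0 ≤ d) (hh : 0 < h) :
    ∫ t : ℝ, (Real.pi * max (h ^ 2 - max (t ^ 2) ((t - d) ^ 2)) 0) =
    Real.pi / 12 * (2 * (max (2 * h) d) ^ 3 - 3 * d * (max (2 * h) d) ^ 2 + d ^ 3) ∧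
    Integrable (fun t : ℝ => (Real.pi * max (h ^ 2 - max (t ^ 2) ((t - d) ^ 2)) 0)) := by
  have hcont : Continuous (fun t : ℝ => (Real.pi * max (h ^ 2 - max (t ^ 2) ((t - d) ^ 2)) 0)) := by
    fun_prop
  rcases le_total (2 * h) d with hle | hle
  · have : (fun t : ℝ => (Real.pi * max (h ^ 2 - max (t ^ 2) ((t - d) ^ 2)) 0)) = fun _ => 0 := by
      ext t
      rw [max_eq_right, mul_zero]
      rcases le_total h t with h1 | h1
      · have := le_max_left (t^2) ((t-d)^2)
        nlinarith
      · have := le_max_right (t^2) ((t-d)^2)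
        nlinarith
    rw [this, max_eq_right hle]
    refine ⟨?_, integrable_zero _ _ _⟩
    simp; ring
  · have hsupp : Function.support (fun t : ℝ => (Real.pi * max (h ^ 2 - max (t ^ 2) ((t - d) ^ 2)) 0))
        ⊆ Set.Ioc (d - h) h := by
      intro t ht
      by_contra hcon
      apply ht
      simp only
      rw [max_eq_right, mul_zero]
      by_cases h1 : h < t
      · have := le_max_left (t^2) ((t-d)^2)
        nlinarith
      · have h2 : t ≤ d - h := by
          by_contra h3
          exact hcon ⟨by linarith, by linarith⟩
        have := le_max_right (t^2) ((t-d)^2)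
        nlinarith
    constructor
    · rw [← setIntegral_eq_integral_of_forall_compl_eq_zero (s := Set.Ioc (d - h) h)
        (fun t ht => by
          by_contra h0
          exact ht (hsupp h0)), ← intervalIntegral.integral_of_le (by linarith),
        ← intervalIntegral.integral_add_adjacent_intervals (b := d / 2)
          (hcont.intervalIntegrable _ _) (hcont.intervalIntegrable _ _)]
      have e1 : ∫ t in (d - h)..(d / 2), (Real.pi * max (h ^ 2 - max (t ^ 2) ((t - d) ^ 2)) 0)
          = ∫ t in (d - h)..(d / 2), (Real.pi * (h ^ 2 - (t - d) ^ 2)) := by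
        apply intervalIntegral.integral_congr
        intro t ht
        rw [Set.uIcc_of_le (by linarith)] at ht
        obtain ⟨h1, h2⟩ := ht
        simp only
        rw [max_eq_right (by nlinarith : t ^ 2 ≤ (t - d)^2), max_eq_left (by nlinarith)]
      have e2 : ∫ t in (d / 2)..h, (Real.pi * max (h ^ 2 - max (t ^ 2) ((t - d) ^ 2)) 0)
          = ∫ t in (d / 2)..h, (Real.pi * (h ^ 2 - t ^ 2)) := by
        apply intervalIntegral.integral_congr
        intro t ht
        rw [Set.uIcc_of_le (by linarith)] at ht
        obtain ⟨h1, h2⟩ := ht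
        simp only
        rw [max_eq_left (by nlinarith : (t - d)^2 ≤ t ^ 2), max_eq_left (by nlinarith)]
      rw [e1, e2, max_eq_left hle]
      have f1 : ∫ t in (d - h)..(d / 2), (Real.pi * (h ^ 2 - (t - d) ^ 2)) =
          Real.pi * (h ^ 2 * (d/2) - (d/2 - d)^3/3) - Real.pi * (h ^ 2 * (d-h) - (d-h - d)^3/3) := by
        apply intervalIntegral.integral_eq_sub_of_hasDerivAt
          (f := fun t => Real.pi * (h ^ 2 * t - (t - d)^3/3))
        · intro t _
          have h1 := ((((hasDerivAt_id' t).sub_const d).pow 3).div_const 3)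
          have h2 := (((hasDerivAt_id' t).const_mul (h^2)).sub h1).const_mul Real.pi
          exact h2.congr_deriv (by simp; try ring)
        · exact (by fun_prop : Continuous fun t : ℝ => (Real.pi * (h ^ 2 - (t - d) ^ 2))).intervalIntegrable _ _
      have f2 : ∫ t in (d / 2)..h, (Real.pi * (h ^ 2 - t ^ 2)) =
          Real.pi * (h ^ 2 * h - h^3/3) - Real.pi * (h ^ 2 * (d/2) - (d/2)^3/3) := by
        apply intervalIntegral.integral_eq_sub_of_hasDerivAt
          (f := fun t => Real.pi * (h ^ 2 * t - t^3/3))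
        · intro t _
          have h1 := ((((hasDerivAt_id' t)).pow 3).div_const 3)
          have h2 := (((hasDerivAt_id' t).const_mul (h^2)).sub h1).const_mul Real.pi
          exact h2.congr_deriv (by simp; try ring)
        · exact (by fun_prop : Continuous fun t : ℝ => (Real.pi * (h ^ 2 - t ^ 2))).intervalIntegrable _ _
      rw [f1, f2]
      ring
    · apply hcont.integrable_of_hasCompactSupport
      apply HasCompactSupport.of_support_subset_isCompact (isCompact_Icc (a := d - h) (b := h))
      exact hsupp.trans Set.Ioc_subset_Icc_self

lemma lens_volume0 (h d : ℝ) (hd : 0 ≤ d) (hh : 0 < h) :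
    volume.real (Metric.ball (0 : E3) h ∩ Metric.ball (EuclideanSpace.single 0 d : E3) h) =
    Real.pi / 12 * (2 * (max (2 * h) d) ^ 3 - 3 * d * (max (2 * h) d) ^ 2 + d ^ 3) := by
  have hms : MeasurableSet (Metric.ball (0 : E3) h ∩ Metric.ball (EuclideanSpace.single 0 d : E3) h) :=
    (Metric.isOpen_ball.inter Metric.isOpen_ball).measurableSet
  have key : volume (Metric.ball (0 : E3) h ∩ Metric.ball (EuclideanSpace.single 0 d : E3) h) =
      ∫⁻ t : ℝ, ENNReal.ofReal (Real.pi * max (h ^ 2 - max (t ^ 2) ((t - d) ^ 2)) 0) := by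
    rw [← (PiLp.volume_preserving_toLp (Fin 3)).measure_preimage hms.nullMeasurableSet]
    have hms2 := (WithLp.measurable_toLp 2 (Fin 3 → ℝ)) hms
    have hp := (volume_preserving_piFinSuccAbove (fun _ : Fin 3 => ℝ) 0).symm
    rw [← hp.measure_preimage hms2.nullMeasurableSet]
    have hms3 := hp.measurable hms2
    rw [Measure.volume_eq_prod, Measure.prod_apply hms3]
    apply lintegral_congr
    intro t
    rw [← disc_volume]
    congr 1
    ext q
    simp only [Set.mem_ofPred_eq, Set.mem_preimage, Set.mem_inter_iff, Metric.mem_ball, 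
      EuclideanSpace.dist_eq, Fin.sum_univ_three, Real.dist_eq, sq_abs,
      MeasurableEquiv.piFinSuccAbove_symm_apply]
    rw [Real.sqrt_lt' hh, Real.sqrt_lt' hh]
    have e2 : (Fin.cons t q : Fin 3 → ℝ) 2 = q 1 := rfl
    simp [Fin.insertNthEquiv, e2]
    rw [lt_sub_comm, max_lt_iff]
    constructor <;> rintro ⟨h1, h2⟩ <;> constructor <;> linarith
  obtain ⟨h1, h2⟩ := lens_integral h d hd hh
  rw [Measure.real, key, ← h1, integral_eq_lintegral_of_nonneg_ae _ h2.1]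
  exact Filter.Eventually.of_forall fun t => by positivity

lemma lens_volume (x y : E3) (h : ℝ) (hh : 0 < h) :
    volume.real (Metric.ball x h ∩ Metric.ball y h) =
    Real.pi / 12 * (2 * (max (2 * h) ‖x - y‖) ^ 3 - 3 * ‖x - y‖ * (max (2 * h) ‖x - y‖) ^ 2
      + ‖x - y‖ ^ 3) := by
  obtain ⟨T, hT⟩ := exists_isometry_map (y - x) (EuclideanSpace.single 0 ‖x - y‖) (by
    simp [norm_sub_rev])
  rw [← lens_volume0 h ‖x - y‖ (norm_nonneg _) hh]
  have hp : MeasurePreserving (fun u : E3 => T (u - x)) :=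
    T.measurePreserving.comp (measurePreserving_sub_right volume x)
  rw [Measure.real, Measure.real, ← hp.measure_preimage
    (s := Metric.ball (0 : E3) h ∩ Metric.ball (EuclideanSpace.single 0 ‖x - y‖ : E3) h)
    (Metric.isOpen_ball.inter Metric.isOpen_ball).measurableSet.nullMeasurableSet]
  congr 2
  ext u
  simp only [Set.mem_preimage, Set.mem_inter_iff, Metric.mem_ball, dist_zero_right,
    LinearIsometryEquiv.norm_map, ← hT, LinearIsometryEquiv.dist_map, dist_sub_right,
    dist_eq_norm u x]

/-- `Q ρ r` -/
noncomputable def Qf (ρ r : ℝ) : ℝ := 2 * (max ρ r) ^ 3 - 3 * r * (max ρ r) ^ 2 + r ^ 3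

lemma Qf_posdef {N : ℕ} (z : Fin N → ℝ) (x : Fin N → E3) (ρ : ℝ) (hρ : 0 < ρ) :
    0 ≤ ∑ i, ∑ j, z i * z j * Qf ρ ‖x i - x j‖ := by
  have h1 : ∀ i j, Qf ρ ‖x i - x j‖ = 12 / Real.pi *
      ∫ u, (Metric.ball (x i) (ρ/2)).indicator (fun _ => (1:ℝ)) u *
        (Metric.ball (x j) (ρ/2)).indicator (fun _ => (1:ℝ)) u := by
    intro i j
    have : ∀ u, (Metric.ball (x i) (ρ/2)).indicator (fun _ => (1:ℝ)) u *
        (Metric.ball (x j) (ρ/2)).indicator (fun _ => (1:ℝ)) u =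
        (Metric.ball (x i) (ρ/2) ∩ Metric.ball (x j) (ρ/2)).indicator 1 u := by
      intro u
      rw [Set.inter_indicator_one]; rfl
    simp_rw [this]
    rw [integral_indicator_one (Metric.isOpen_ball.inter Metric.isOpen_ball).measurableSet,
      lens_volume _ _ _ (by linarith)]
    have := Real.pi_pos
    unfold Qf
    rw [show 2 * (ρ / 2) = ρ by ring]
    field_simp
  have hint : ∀ i j, Integrable (fun u => (Metric.ball (x i) (ρ/2)).indicator (fun _ => (1:ℝ)) u *
        (Metric.ball (x j) (ρ/2)).indicator (fun _ => (1:ℝ)) u) := by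
    intro i j
    have : (fun u => (Metric.ball (x i) (ρ/2)).indicator (fun _ => (1:ℝ)) u *
        (Metric.ball (x j) (ρ/2)).indicator (fun _ => (1:ℝ)) u) =
        (Metric.ball (x i) (ρ/2) ∩ Metric.ball (x j) (ρ/2)).indicator (fun _ => (1:ℝ)) := by
      ext u
      exact (congrFun (Set.inter_indicator_one) u).symm
    rw [this]
    refine (integrable_indicator_iff
      (Metric.isOpen_ball.inter Metric.isOpen_ball).measurableSet).2 ?_
    apply integrableOn_const
    · exact ((measure_mono Set.inter_subset_left).trans_lt measure_ball_lt_top).ne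
    · simp
  have h2 : ∑ i, ∑ j, z i * z j * Qf ρ ‖x i - x j‖ = 12 / Real.pi *
      ∫ u, (∑ i, z i * (Metric.ball (x i) (ρ/2)).indicator (fun _ => (1:ℝ)) u) ^ 2 := by
    have : ∀ u, (∑ i, z i * (Metric.ball (x i) (ρ/2)).indicator (fun _ => (1:ℝ)) u) ^ 2 =
      ∑ i, ∑ j, z i * z j * ((Metric.ball (x i) (ρ/2)).indicator (fun _ => (1:ℝ)) u *
        (Metric.ball (x j) (ρ/2)).indicator (fun _ => (1:ℝ)) u) := by
      intro u
      rw [sq, Finset.sum_mul_sum]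
      refine Finset.sum_congr rfl fun i _ => Finset.sum_congr rfl fun j _ => by ring
    simp_rw [this]
    rw [integral_finsetSum _ (fun i _ => integrable_finsetSum _ fun j _ => (hint i j).const_mul _),
      Finset.mul_sum]
    refine Finset.sum_congr rfl fun i _ => ?_
    rw [integral_finsetSum _ (fun j _ => (hint i j).const_mul _), Finset.mul_sum]
    refine Finset.sum_congr rfl fun j _ => ?_
    rw [h1, integral_const_mul]; ring
  rw [h2]
  have := Real.pi_pos
  exact mul_nonneg (by positivity) (integral_nonneg fun u => sq_nonneg _)

lemma Qf_zero_of_le {ρ r : ℝ} (h : ρ ≤ r) : Qf ρ r = 0 := by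
  unfold Qf; rw [max_eq_right h]; ring

lemma Qf_of_le {ρ r : ℝ} (h : r ≤ ρ) : Qf ρ r = 2 * ρ ^ 3 - 3 * r * ρ ^ 2 + r ^ 3 := by
  unfold Qf; rw [max_eq_left h]

lemma Qf_cont (r : ℝ) : Continuous fun ρ => Qf ρ r := by
  unfold Qf; fun_prop

lemma I2_integrable (r L : ℝ) (hL : 1 ≤ L) :
    IntervalIntegrable (fun ρ => Qf ρ r / ρ ^ 5) volume 1 L := by
  apply ContinuousOn.intervalIntegrable
  rw [Set.uIcc_of_le hL]
  apply ContinuousOn.div (Qf_cont r).continuousOn (by fun_prop)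
  intro t ht
  have : 0 < t := by linarith [ht.1]
  positivity

lemma I2_aux (r L s : ℝ) (hs : 0 < s) (hrs : r ≤ s) (hL : s ≤ L) :
    ∫ ρ in s..L, Qf ρ r / ρ ^ 5 =
      (-2 / L + 3 * r / (2 * L ^ 2) - r ^ 3 / (4 * L ^ 4)) -
      (-2 / s + 3 * r / (2 * s ^ 2) - r ^ 3 / (4 * s ^ 4)) := by
  apply intervalIntegral.integral_eq_sub_of_hasDerivAt
    (f := fun t => -2 / t + 3 * r / (2 * t ^ 2) - r ^ 3 / (4 * t ^ 4))
  · intro t ht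
    rw [Set.uIcc_of_le hL] at ht
    have ht0 : 0 < t := by linarith [ht.1]
    have h1 := (hasDerivAt_const t (-2:ℝ)).div (hasDerivAt_id' t) ht0.ne'
    have h2 := (hasDerivAt_const t (3*r)).div (((hasDerivAt_id' t).pow 2).const_mul 2)
      (show (2:ℝ) * t ^ 2 ≠ 0 by positivity)
    have h3 := (hasDerivAt_const t (r^3)).div (((hasDerivAt_id' t).pow 4).const_mul 4)
      (show (4:ℝ) * t ^ 4 ≠ 0 by positivity)
    refine ((h1.add h2).sub h3).congr_deriv ?_
    rw [Qf_of_le (hrs.trans ht.1)]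
    simp
    field_simp
    ring
  · apply ContinuousOn.intervalIntegrable
    rw [Set.uIcc_of_le hL]
    apply ContinuousOn.div (Qf_cont r).continuousOn (by fun_prop)
    intro t ht
    have : 0 < t := by linarith [ht.1]
    positivity

lemma I2_val (r L : ℝ) (hL : 1 ≤ L) (hrL : r ≤ L) :
    ∫ ρ in (1:ℝ)..L, Qf ρ r / ρ ^ 5 =
      (-2 / L + 3 * r / (2 * L ^ 2) - r ^ 3 / (4 * L ^ 4)) +
      (if r ≤ 1 then 2 - 3 * r / 2 + r ^ 3 / 4 else 3 / (4 * r)) := by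
  split_ifs with h
  · rw [I2_aux r L 1 one_pos h hL]; ring
  · push Not at h
    have hi := I2_integrable r L hL
    have hi1 := I2_integrable r r h.le
    rw [← intervalIntegral.integral_add_adjacent_intervals hi1 (hi1.symm.trans hi),
      I2_aux r L r (by linarith) le_rfl hrL]
    have : ∫ ρ in (1:ℝ)..r, Qf ρ r / ρ ^ 5 = ∫ ρ in (1:ℝ)..r, 0 := by
      apply intervalIntegral.integral_congr
      intro t ht
      rw [Set.uIcc_of_le h.le] at ht
      simp [Qf_zero_of_le ht.2]
    rw [this]
    have : r ≠ 0 := by linarith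
    have : L ≠ 0 := by linarith
    simp
    field_simp
    ring

/-- a continuous version of `Qf ρ r / ρ ^ 2` -/
noncomputable def f1 (r ρ : ℝ) : ℝ := 2 * max ρ r - 3 * r + r ^ 3 / (max ρ r) ^ 2

lemma f1_cont (r : ℝ) (hr : 0 ≤ r) : Continuous (f1 r) := by
  unfold f1
  rcases hr.eq_or_lt with h | h
  · subst h
    simp; fun_prop
  · apply Continuous.add (by fun_prop)
    apply Continuous.div (by fun_prop) (by fun_prop)
    intro t
    have : 0 < max t r := lt_max_of_lt_right h
    positivity

lemma f1_zero {r ρ : ℝ} (h : ρ ≤ r) : f1 r ρ = 0 := by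
  unfold f1; rw [max_eq_right h]
  by_cases hr : r = 0
  · simp [hr]
  · field_simp; ring

lemma f1_eq (r ρ : ℝ) (hρ : 0 < ρ) : f1 r ρ = Qf ρ r / ρ ^ 2 := by
  rcases le_total ρ r with h | h
  · rw [Qf_zero_of_le h, f1_zero h]; simp
  · rw [Qf_of_le h]; unfold f1; rw [max_eq_left h]; field_simp

lemma I1_val (r : ℝ) (hr : 0 ≤ r) : ∫ ρ in (0:ℝ)..1, f1 r ρ = (max (1 - r) 0) ^ 3 := by
  have hc := f1_cont r hr
  rcases le_total 1 r with h | h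
  · have : ∫ ρ in (0:ℝ)..1, f1 r ρ = ∫ ρ in (0:ℝ)..1, 0 := by
      apply intervalIntegral.integral_congr
      intro t ht
      rw [Set.uIcc_of_le zero_le_one] at ht
      simp [f1_zero (ht.2.trans h)]
    rw [this, max_eq_right (by linarith)]; simp
  · rw [max_eq_left (by linarith), ← intervalIntegral.integral_add_adjacent_intervals (b := r)
      (hc.intervalIntegrable _ _) (hc.intervalIntegrable _ _)]
    have : ∫ ρ in (0:ℝ)..r, f1 r ρ = ∫ ρ in (0:ℝ)..r, 0 := by
      apply intervalIntegral.integral_congr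
      intro t ht
      rw [Set.uIcc_of_le hr] at ht
      simp [f1_zero ht.2]
    rw [this]
    have h2 : ∫ ρ in r..1, f1 r ρ = (1 ^ 2 - 3 * r * 1 - r ^ 3 / 1) - (r ^ 2 - 3 * r * r - r ^ 3 / r) := by
      apply intervalIntegral.integral_eq_sub_of_hasDerivAt
        (f := fun t => t ^ 2 - 3 * r * t - r ^ 3 / t)
      · intro t ht
        rw [Set.uIcc_of_le h] at ht
        rcases hr.eq_or_lt with h0 | h0
        · subst h0
          have h9 : HasDerivAt (fun t : ℝ => t ^ 2) (2 * t) t := by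
            simpa using hasDerivAt_pow 2 t
          simp only [f1, max_eq_left ht.1]
          simpa using h9
        · have ht0 : 0 < t := by linarith [ht.1]
          have h1 := (hasDerivAt_const t (r^3)).div (hasDerivAt_id' t) ht0.ne'
          refine ((((hasDerivAt_id' t).pow 2).sub ((hasDerivAt_id' t).const_mul (3*r))).sub
            h1).congr_deriv ?_
          simp only [f1, max_eq_left ht.1]
          simp
          field_simp
          ring
      · exact hc.intervalIntegrable _ _
    rw [h2]
    by_cases h0 : r = 0
    · simp [h0]
    · simp
      field_simp
      ring

/-- the truncated Coulomb kernel -/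
noncomputable def G1 (r : ℝ) : ℝ := if r = 0 then 3 else (1 - (max (1 - r) 0) ^ 3) / r

lemma G1_repr (r L : ℝ) (hr : 0 ≤ r) (hL : 1 ≤ L) (hrL : r ≤ L) :
    (1 / 3) * (∫ ρ in (0:ℝ)..1, f1 r ρ) + (4 / 3) * (∫ ρ in (1:ℝ)..L, Qf ρ r / ρ ^ 5) =
    G1 r + (-(8/3) / L + 2 * r / L ^ 2 - r ^ 3 / 3 / L ^ 4) := by
  rw [I1_val r hr, I2_val r L hL hrL]
  have hL0 : L ≠ 0 := by linarith
  unfold G1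
  by_cases h0 : r = 0
  · simp [h0]; field_simp; ring
  · rw [if_neg h0]
    split_ifs with h
    · rw [max_eq_left (by linarith)]
      field_simp; ring
    · rw [max_eq_right (by linarith)]
      field_simp; ring

lemma G1_posdef {N : ℕ} (z : Fin N → ℝ) (x : Fin N → E3) :
    0 ≤ ∑ i, ∑ j, z i * z j * G1 ‖x i - x j‖ := by
  have hlim : Filter.Tendsto (fun L : ℝ => ∑ i, ∑ j, z i * z j * (G1 ‖x i - x j‖ +
      (-(8/3) / L + 2 * ‖x i - x j‖ / L ^ 2 - ‖x i - x j‖ ^ 3 / 3 / L ^ 4))) Filter.atTop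
      (nhds (∑ i, ∑ j, z i * z j * (G1 ‖x i - x j‖ + (0 + 0 - 0)))) := by
    refine tendsto_finsetSum _ fun i _ => tendsto_finsetSum _ fun j _ => ?_
    refine Filter.Tendsto.const_mul _ (Filter.Tendsto.const_add _ ?_)
    refine ((Filter.tendsto_id.const_div_atTop _).add ?_).sub ?_
    · exact (Filter.tendsto_pow_atTop two_ne_zero).const_div_atTop _
    · exact (Filter.tendsto_pow_atTop four_ne_zero).const_div_atTop _
  simp only [add_zero, sub_zero] at hlim
  refine ge_of_tendsto hlim ?_
  have hev : ∀ᶠ L : ℝ in Filter.atTop, ∀ i j, ‖x i - x j‖ ≤ L := by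
    rw [Filter.eventually_all]; intro i
    rw [Filter.eventually_all]; intro j
    exact Filter.eventually_ge_atTop _
  filter_upwards [hev, Filter.eventually_ge_atTop 1] with L hL1 hL
  have h1 : 0 ≤ ∫ ρ in (0:ℝ)..1, ∑ i, ∑ j, z i * z j * f1 ‖x i - x j‖ ρ := by
    rw [intervalIntegral.integral_of_le zero_le_one]
    refine setIntegral_nonneg measurableSet_Ioc fun ρ hρ => ?_
    have : ∑ i, ∑ j, z i * z j * f1 ‖x i - x j‖ ρ
        = (∑ i, ∑ j, z i * z j * Qf ρ ‖x i - x j‖) / ρ ^ 2 := by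
      rw [Finset.sum_div]
      refine Finset.sum_congr rfl fun i _ => ?_
      rw [Finset.sum_div]
      refine Finset.sum_congr rfl fun j _ => ?_
      rw [f1_eq _ _ hρ.1]; ring
    rw [this]
    have := Qf_posdef z x ρ hρ.1
    positivity
  have h2 : 0 ≤ ∫ ρ in (1:ℝ)..L, ∑ i, ∑ j, z i * z j * (Qf ρ ‖x i - x j‖ / ρ ^ 5) := by
    apply intervalIntegral.integral_nonneg hL
    intro ρ hρ
    have hρ0 : 0 < ρ := by linarith [hρ.1]
    have : ∑ i, ∑ j, z i * z j * (Qf ρ ‖x i - x j‖ / ρ ^ 5)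
        = (∑ i, ∑ j, z i * z j * Qf ρ ‖x i - x j‖) / ρ ^ 5 := by
      rw [Finset.sum_div]
      refine Finset.sum_congr rfl fun i _ => ?_
      rw [Finset.sum_div]
      refine Finset.sum_congr rfl fun j _ => ?_
      ring
    rw [this]
    have := Qf_posdef z x ρ hρ0
    positivity
  have i1 : ∀ i j, IntervalIntegrable (fun ρ => z i * z j * f1 ‖x i - x j‖ ρ) volume 0 1 :=
    fun i j => ((f1_cont _ (norm_nonneg _)).intervalIntegrable _ _).const_mul _
  have i2 : ∀ i j, IntervalIntegrable (fun ρ => z i * z j * (Qf ρ ‖x i - x j‖ / ρ ^ 5)) volume 1 L :=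
    fun i j => (I2_integrable _ _ hL).const_mul _
  rw [intervalIntegral.integral_finsetSum (fun i _ => by
    have := IntervalIntegrable.sum (μ := volume) (a := 0) (b := 1) Finset.univ (f := fun j ρ => z i * z j * f1 ‖x i - x j‖ ρ) (fun j _ => i1 i j)
    simpa [Finset.sum_fn] using this)] at h1
  rw [intervalIntegral.integral_finsetSum (fun i _ => by
    have := IntervalIntegrable.sum (μ := volume) (a := 1) (b := L) Finset.univ (f := fun j ρ => z i * z j * (Qf ρ ‖x i - x j‖ / ρ ^ 5)) (fun j _ => i2 i j)
    simpa [Finset.sum_fn] using this)] at h2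
  have e : ∑ i, ∑ j, z i * z j * (G1 ‖x i - x j‖ +
      (-(8/3) / L + 2 * ‖x i - x j‖ / L ^ 2 - ‖x i - x j‖ ^ 3 / 3 / L ^ 4)) =
      (1/3) * (∑ i, ∫ ρ in (0:ℝ)..1, ∑ j, z i * z j * f1 ‖x i - x j‖ ρ) +
      (4/3) * (∑ i, ∫ ρ in (1:ℝ)..L, ∑ j, z i * z j * (Qf ρ ‖x i - x j‖ / ρ ^ 5)) := by
    rw [Finset.mul_sum, Finset.mul_sum, ← Finset.sum_add_distrib]
    refine Finset.sum_congr rfl fun i _ => ?_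
    rw [intervalIntegral.integral_finsetSum (fun j _ => i1 i j),
      intervalIntegral.integral_finsetSum (fun j _ => i2 i j),
      Finset.mul_sum, Finset.mul_sum, ← Finset.sum_add_distrib]
    refine Finset.sum_congr rfl fun j _ => ?_
    rw [← G1_repr _ _ (norm_nonneg _) hL (hL1 i j), intervalIntegral.integral_const_mul,
      intervalIntegral.integral_const_mul]
    ring
  rw [e]
  positivity

lemma sum_lt_sym {N : ℕ} (F : Fin N → Fin N → ℝ) (hs : ∀ i j, F i j = F j i) :
    ∑ i, ∑ j, F i j = 2 * ∑ i, ∑ j ∈ Ioi i, F i j + ∑ i, F i i := by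
  have h1 : ∀ i, ∑ j, F i j = ∑ j ∈ Ioi i, F i j + F i i + ∑ j ∈ Iio i, F i j := by
    intro i
    have hu : (Finset.univ : Finset (Fin N)) = Ioi i ∪ ({i} ∪ Iio i) := by
      ext j
      simp only [Finset.mem_univ, Finset.mem_union, Finset.mem_Ioi, Finset.mem_singleton,
        Finset.mem_Iio, true_iff]
      rcases lt_trichotomy i j with h | h | h
      · exact Or.inl h
      · exact Or.inr (Or.inl h.symm)
      · exact Or.inr (Or.inr h)
    rw [hu, Finset.sum_union, Finset.sum_union]
    · simp; ring
    · simp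
    · rw [Finset.disjoint_left]; intro j hj
      simp only [Finset.mem_union, Finset.mem_Ioi, Finset.mem_singleton,
        Finset.mem_Iio] at hj ⊢
      rintro (h | h)
      · exact hj.ne' h
      · exact lt_asymm hj h
  have h2 : ∑ i, ∑ j ∈ Iio i, F i j = ∑ i, ∑ j ∈ Ioi i, F i j := by
    rw [Finset.sum_comm' (t' := Finset.univ) (s' := fun j => Ioi j) (by simp)]
    exact Finset.sum_congr rfl fun i _ => Finset.sum_congr rfl fun j _ => hs _ _
  simp_rw [h1, Finset.sum_add_distrib]
  rw [h2]; ring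

lemma energy_bound {N : ℕ} (z : Fin N → ℝ) (x : Fin N → E3) (hx : Function.Injective x)
    (a : ℝ) (ha : 0 ≤ a) :
    ∑ i, ∑ j ∈ Ioi i, z i * z j / ‖x i - x j‖ * (max (1 - a * ‖x i - x j‖) 0) ^ 3 ≤
    ∑ i, ∑ j ∈ Ioi i, z i * z j / ‖x i - x j‖ + (3 * a / 2) * ∑ i, z i ^ 2 := by
  rcases ha.eq_or_lt with h0 | h0
  · subst h0; simp
  have h := G1_posdef z (fun i => a • x i)
  simp_rw [← smul_sub, norm_smul, Real.norm_of_nonneg ha] at h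
  rw [sum_lt_sym _ (fun i j => by rw [norm_sub_rev]; ring)] at h
  have h3 : ∑ i, z i * z i * G1 (a * ‖x i - x i‖) = 3 * ∑ i, z i ^ 2 := by
    rw [Finset.mul_sum]
    refine Finset.sum_congr rfl fun i _ => ?_
    simp [G1]; ring
  rw [h3] at h
  have h4 : ∑ i, ∑ j ∈ Ioi i, z i * z j / ‖x i - x j‖ - 
      ∑ i, ∑ j ∈ Ioi i, z i * z j / ‖x i - x j‖ * (max (1 - a * ‖x i - x j‖) 0) ^ 3
      = a * ∑ i, ∑ j ∈ Ioi i, z i * z j * G1 (a * ‖x i - x j‖) := by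
    rw [← Finset.sum_sub_distrib, Finset.mul_sum]
    refine Finset.sum_congr rfl fun i _ => ?_
    rw [← Finset.sum_sub_distrib, Finset.mul_sum]
    refine Finset.sum_congr rfl fun j hj => ?_
    have hne : ‖x i - x j‖ ≠ 0 := by
      rw [norm_ne_zero_iff, sub_ne_zero]
      exact fun hh => (Finset.mem_Ioi.1 hj).ne (hx hh)
    rw [G1, if_neg (mul_ne_zero h0.ne' hne)]
    field_simp
  nlinarith [mul_nonneg ha h]

/-- the gauge-like function attached to the simplex -/
noncomputable def pf (b : AffineBasis (Fin 4) ℝ E3) (w : E3) : ℝ :=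
  ∑ k, max (-(b.coord k).linear w) 0

lemma coord_add (b : AffineBasis (Fin 4) ℝ E3) (k : Fin 4) (y w : E3) :
    b.coord k (y + w) = b.coord k y + (b.coord k).linear w := by
  have := (b.coord k).map_vadd y w
  simp only [vadd_eq_add] at this
  rw [add_comm y w, this, add_comm]

lemma sum_linear (b : AffineBasis (Fin 4) ℝ E3) (w : E3) : ∑ k, (b.coord k).linear w = 0 := by
  have h1 := b.sum_coord_apply_eq_one (0 + w)
  have h0 := b.sum_coord_apply_eq_one (0 : E3)
  simp_rw [coord_add, Finset.sum_add_distrib] at h1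
  linarith

lemma pf_nonneg (b : AffineBasis (Fin 4) ℝ E3) (w : E3) : 0 ≤ pf b w :=
  Finset.sum_nonneg fun _ _ => le_max_right _ _

lemma pf_smul (b : AffineBasis (Fin 4) ℝ E3) (w : E3) (t : ℝ) (ht : 0 ≤ t) :
    pf b (t • w) = t * pf b w := by
  unfold pf
  rw [Finset.mul_sum]
  refine Finset.sum_congr rfl fun k _ => ?_
  rw [map_smul, smul_eq_mul, mul_max_of_nonneg _ _ ht]
  simp

lemma pf_neg (b : AffineBasis (Fin 4) ℝ E3) (w : E3) : pf b (-w) = pf b w := by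
  have h := sum_linear b w
  have : pf b (-w) - pf b w = ∑ k, (b.coord k).linear w := by
    unfold pf
    rw [← Finset.sum_sub_distrib]
    refine Finset.sum_congr rfl fun k _ => ?_
    rw [map_neg, neg_neg]
    rcases le_total 0 ((b.coord k).linear w) with h | h
    · rw [max_eq_left h, max_eq_right (by linarith)]; ring
    · rw [max_eq_right h, max_eq_left (by linarith)]; ring
  linarith

lemma pf_cont (b : AffineBasis (Fin 4) ℝ E3) : Continuous (pf b) := by
  unfold pf
  have : ∀ k, Continuous (b.coord k).linear := fun k =>
    LinearMap.continuous_of_finiteDimensional _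
  fun_prop

lemma coord_comb (b : AffineBasis (Fin 4) ℝ E3) (k : Fin 4) (y : E3) (s : ℝ) (m : Fin 4 → ℝ)
    (hm : s + ∑ j, m j = 1) :
    b.coord k (s • y + ∑ j, m j • b j) = s * b.coord k y + m k := by
  have e : ∀ v, b.coord k v = b.coord k 0 + (b.coord k).linear v := fun v => by
    rw [← coord_add, zero_add]
  have h2 : ∑ j, m j * b.coord k (b j) = m k := by
    simp [b.coord_apply]
  have h3 : ∑ j, m j * b.coord k (b j) = (∑ j, m j) * b.coord k 0
      + ∑ j, m j * (b.coord k).linear (b j) := by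
    rw [Finset.sum_mul, ← Finset.sum_add_distrib]
    refine Finset.sum_congr rfl fun j _ => ?_
    rw [e (b j)]; ring
  rw [e, e y, map_add, map_sum, map_smul]
  simp only [map_smul, smul_eq_mul]
  have : b.coord k 0 = (s + ∑ j, m j) * b.coord k 0 := by rw [hm, one_mul]
  linear_combination this + h2 - h3

lemma covariogram (b : AffineBasis (Fin 4) ℝ E3) (Δ : Set E3)
    (hΔ : Δ = {y | ∀ k, 0 < b.coord k y}) (w : E3) :
    volume.real {y | y ∈ Δ ∧ y + w ∈ Δ} = (max (1 - pf b w) 0) ^ 3 * volume.real Δ := by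
  have hmem : ∀ y, (y ∈ Δ ∧ y + w ∈ Δ) ↔ ∀ k, max (-(b.coord k).linear w) 0 < b.coord k y := by
    intro y
    rw [hΔ]
    simp only [Set.mem_ofPred_eq, coord_add, ← forall_and, max_lt_iff]
    refine forall_congr' fun k => ⟨fun h => ⟨by linarith [h.2], h.1⟩, fun h => ⟨h.2, by linarith [h.1]⟩⟩
  rcases le_or_gt (1 - pf b w) 0 with hs | hs
  · have : {y | y ∈ Δ ∧ y + w ∈ Δ} = ∅ := by
      rw [Set.eq_empty_iff_forall_notMem]
      intro y hy
      have h1 := (hmem y).1 hy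
      have h2 : pf b w < ∑ k, b.coord k y := by
        unfold pf
        exact Finset.sum_lt_sum_of_nonempty Finset.univ_nonempty fun k _ => h1 k
      rw [b.sum_coord_apply_eq_one] at h2
      linarith
    rw [this, max_eq_right hs]; simp
  · set s := 1 - pf b w with hsdef
    set q : E3 := ∑ j, max (-(b.coord j).linear w) 0 • b j with hq
    have hset : {y | y ∈ Δ ∧ y + w ∈ Δ} = (fun y => y - q) ⁻¹' ((s⁻¹ • ·) ⁻¹' Δ) := by
      ext y
      simp only [Set.mem_preimage, Set.mem_ofPred_eq]
      rw [hmem]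
      have hy : y = s • (s⁻¹ • (y - q)) + q := by
        rw [smul_inv_smul₀ hs.ne']; abel
      have hk : ∀ k, b.coord k y = s * b.coord k (s⁻¹ • (y - q))
          + max (-(b.coord k).linear w) 0 := by
        intro k
        conv_lhs => rw [hy]
        exact coord_comb b k _ s (fun j => max (-(b.coord j).linear w) 0) (by
          rw [hsdef]; unfold pf; ring)
      rw [hΔ]
      refine forall_congr' fun k => ?_
      rw [hk k]
      constructor
      · intro h
        exact (pos_iff_pos_of_mul_pos (by linarith : 0 < s * b.coord k (s⁻¹ • (y - q)))).1 hs
      · intro h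
        have := mul_pos hs h
        linarith
    have hshift : ∀ S : Set E3, volume ((fun y => y - q) ⁻¹' S) = volume S := fun S => by
      simpa only [sub_eq_add_neg] using measure_preimage_add_right volume (-q) S
    rw [hset, max_eq_left hs.le, Measure.real, Measure.real, hshift,
      Measure.addHaar_preimage_smul _ (inv_ne_zero hs.ne'), ENNReal.toReal_mul]
    congr 1
    rw [ENNReal.toReal_ofReal (abs_nonneg _)]
    simp
    rw [abs_of_pos hs]

lemma inner_integral (b : AffineBasis (Fin 4) ℝ E3) (Δ : Set E3)
    (hΔ : Δ = {y | ∀ k, 0 < b.coord k y}) (hop : IsOpen Δ) (T : E3 ≃ₗᵢ[ℝ] E3)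
    (ℓ : ℝ) (hℓ : 0 < ℓ) (x x' : E3) :
    (∫ u, Set.indicator ((fun y => T y + u) '' (ℓ • Δ)) (fun _ => (1 : ℝ)) x *
      Set.indicator ((fun y => T y + u) '' (ℓ • Δ)) (fun _ => (1 : ℝ)) x') =
    ℓ ^ 3 * volume.real Δ * (max (1 - pf b (ℓ⁻¹ • T.symm (x - x'))) 0) ^ 3 ∧
    (volume Δ ≠ ∞ → Integrable (fun u =>
      Set.indicator ((fun y => T y + u) '' (ℓ • Δ)) (fun _ => (1 : ℝ)) x *
      Set.indicator ((fun y => T y + u) '' (ℓ • Δ)) (fun _ => (1 : ℝ)) x')) := by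
  have hmem : ∀ u v, v ∈ ((fun y => T y + u) '' (ℓ • Δ)) ↔ ℓ⁻¹ • T.symm (v - u) ∈ Δ := by
    intro u v
    rw [← Set.mem_smul_set_iff_inv_smul_mem₀ hℓ.ne']
    constructor
    · rintro ⟨y, hy, rfl⟩
      simpa using hy
    · intro h
      exact ⟨_, h, by simp⟩
  set w := ℓ⁻¹ • T.symm (x - x') with hw
  set W := {y | y ∈ Δ ∧ y + w ∈ Δ} with hW
  set U : Set E3 := (fun u => x' - u) ⁻¹' (T.symm ⁻¹' ((ℓ⁻¹ • ·) ⁻¹' W)) with hU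
  have hWo : IsOpen W := hop.inter (hop.preimage (by fun_prop : Continuous fun y => y + w))
  have hUo : IsOpen U := by
    apply IsOpen.preimage (by fun_prop)
    apply IsOpen.preimage T.symm.continuous
    exact hWo.preimage (by fun_prop)
  have hind : (fun u => Set.indicator ((fun y => T y + u) '' (ℓ • Δ)) (fun _ => (1 : ℝ)) x *
      Set.indicator ((fun y => T y + u) '' (ℓ • Δ)) (fun _ => (1 : ℝ)) x') =
      U.indicator (fun _ => (1:ℝ)) := by
    ext u
    have hu : u ∈ U ↔ (x ∈ ((fun y => T y + u) '' (ℓ • Δ)) ∧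
        x' ∈ ((fun y => T y + u) '' (ℓ • Δ))) := by
      rw [hmem, hmem, hU]
      simp only [Set.mem_preimage, hW, Set.mem_ofPred_eq, hw, ← smul_add, ← map_add]
      rw [and_comm, show x' - u + (x - x') = x - u by abel]
    classical
    simp only [Set.indicator_apply, hu]
    generalize (x ∈ ((fun y => T y + u) '' (ℓ • Δ))) = P1
    generalize (x' ∈ ((fun y => T y + u) '' (ℓ • Δ))) = P2
    by_cases h1 : P1 <;> by_cases h2 : P2 <;> simp [h1, h2]
  have hvol : volume U = ENNReal.ofReal (ℓ ^ 3) * volume W := by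
    have hp : MeasurePreserving (fun u : E3 => T.symm (x' - u)) :=
      T.symm.measurePreserving.comp (Measure.measurePreserving_sub_left volume x')
    have : U = (fun u : E3 => T.symm (x' - u)) ⁻¹' ((ℓ⁻¹ • ·) ⁻¹' W) := rfl
    rw [this, hp.measure_preimage
      (hWo.preimage (by fun_prop : Continuous fun y : E3 => ℓ⁻¹ • y)).measurableSet.nullMeasurableSet,
      Measure.addHaar_preimage_smul _ (inv_ne_zero hℓ.ne')]
    congr 2
    simp [abs_of_pos hℓ]
  rw [hind]
  constructor
  · have := integral_indicator_one (μ := volume) hUo.measurableSet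
    have e : U.indicator (fun _ => (1:ℝ)) = U.indicator 1 := rfl
    rw [e, this, Measure.real, hvol, ENNReal.toReal_mul, ENNReal.toReal_ofReal (by positivity)]
    have := covariogram b Δ hΔ w
    rw [Measure.real] at this
    rw [this]; ring
  · intro hfin
    refine (integrable_indicator_iff hUo.measurableSet).2 ?_
    apply integrableOn_const
    · rw [hvol]
      apply ENNReal.mul_ne_top (by simp)
      exact ((measure_mono (fun y hy => hy.1)).trans_lt hfin.lt_top).ne
    · simp

abbrev SO3 := Matrix.specialOrthogonalGroup (Fin 3) ℝ

/-- the inverse rotation -/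
noncomputable def AT (R : SO3) (v : E3) : E3 :=
  Matrix.toEuclideanLin ((R : Matrix (Fin 3) (Fin 3) ℝ).transpose) v

lemma SO3_mul_tr (R : SO3) : (R : Matrix (Fin 3) (Fin 3) ℝ) * R.1.transpose = 1 := by
  have := (Matrix.mem_specialOrthogonalGroup_iff.1 R.2).1
  rw [Matrix.mem_orthogonalGroup_iff] at this
  simpa using this

lemma SO3_tr_mul (R : SO3) : R.1.transpose * (R : Matrix (Fin 3) (Fin 3) ℝ) = 1 := by
  have := (Matrix.mem_specialOrthogonalGroup_iff.1 R.2).1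
  rw [Matrix.mem_orthogonalGroup_iff'] at this
  simpa using this

lemma toE_mul (A B : Matrix (Fin 3) (Fin 3) ℝ) (v : E3) :
    Matrix.toEuclideanLin (A * B) v = Matrix.toEuclideanLin A (Matrix.toEuclideanLin B v) := by
  simp [Matrix.toLpLin_apply, Matrix.mulVec_mulVec]

lemma toE_norm (A : Matrix (Fin 3) (Fin 3) ℝ) (hA : A.transpose * A = 1) (v : E3) :
    ‖Matrix.toEuclideanLin A v‖ = ‖v‖ := by
  have h : inner ℝ (Matrix.toEuclideanLin A v) (Matrix.toEuclideanLin A v) = inner ℝ v v := by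
    rw [← LinearMap.adjoint_inner_left, ← Matrix.toEuclideanLin_conjTranspose_eq_adjoint,
      ← toE_mul, Matrix.conjTranspose_eq_transpose_of_trivial, hA]
    simp
  rw [real_inner_self_eq_norm_sq, real_inner_self_eq_norm_sq] at h
  exact (pow_left_inj₀ (norm_nonneg _) (norm_nonneg _) two_ne_zero).1 h

/-- rotation as an isometry -/
noncomputable def rotE (R : SO3) : E3 ≃ₗᵢ[ℝ] E3 where
  toFun := Matrix.toEuclideanLin (R : Matrix (Fin 3) (Fin 3) ℝ)
  invFun := AT R
  map_add' := map_add _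
  map_smul' := map_smul _
  left_inv v := by
    unfold AT
    rw [← toE_mul, SO3_tr_mul]; simp
  right_inv v := by
    unfold AT
    rw [← toE_mul, SO3_mul_tr]; simp
  norm_map' v := toE_norm _ (SO3_tr_mul R) v

lemma AT_mul (g R : SO3) (v : E3) : AT (g * R) v = AT R (AT g v) := by
  unfold AT
  rw [← toE_mul]
  simp

lemma AT_cont (v : E3) : Continuous fun R : SO3 => AT R v := by
  unfold AT
  simp only [Matrix.toLpLin_apply]
  apply (PiLp.continuous_toLp 2 _).comp
  exact Continuous.matrix_mulVec (continuous_subtype_val.matrix_transpose) continuous_const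

lemma exists_rot (v w : E3) (h : ‖v‖ = ‖w‖) : ∃ g : SO3, AT g v = w ∨ AT g v = -w := by
  obtain ⟨T, hT⟩ := exists_isometry_map v w h
  set M : Matrix (Fin 3) (Fin 3) ℝ := Matrix.toEuclideanLin.symm (T : E3 →ₗ[ℝ] E3) with hM
  have hMT : ∀ u, Matrix.toEuclideanLin M u = T u := by
    intro u; rw [hM, LinearEquiv.apply_symm_apply]; rfl
  have hMu : M ∈ Matrix.orthogonalGroup (Fin 3) ℝ :=
    LinearIsometryEquiv.toMatrix_mem_unitaryGroup T (EuclideanSpace.basisFun (Fin 3) ℝ)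
      (EuclideanSpace.basisFun (Fin 3) ℝ)
  have h1 := (Matrix.mem_orthogonalGroup_iff (A := M)).1 hMu
  have h2 := (Matrix.mem_orthogonalGroup_iff' (A := M)).1 hMu
  have hdet : M.det * M.det = 1 := by
    have := congrArg Matrix.det h1
    simpa using this
  rcases mul_self_eq_one_iff.1 hdet with hd | hd
  · refine ⟨⟨M.transpose, Matrix.mem_specialOrthogonalGroup_iff.2 ⟨?_, ?_⟩⟩, Or.inl ?_⟩
    · rw [Matrix.mem_orthogonalGroup_iff]
      simpa using h2
    · simpa using hd
    · unfold AT
      simp only [Matrix.transpose_transpose]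
      rw [hMT, hT]
  · refine ⟨⟨(-M).transpose, Matrix.mem_specialOrthogonalGroup_iff.2 ⟨?_, ?_⟩⟩, Or.inr ?_⟩
    · rw [Matrix.mem_orthogonalGroup_iff]
      simpa using h2
    · rw [Matrix.det_transpose, Matrix.det_neg, hd]; simp; norm_num
    · unfold AT
      simp only [Matrix.transpose_transpose]
      rw [map_neg, LinearMap.neg_apply, hMT, hT]

lemma rot_average (μ : Measure SO3) (hμinv : ∀ g : SO3, μ.map (fun h => g * h) = μ)
    (φ : E3 → ℝ) (hφ : Continuous φ) (hev : ∀ v, φ (-v) = φ v) (v w : E3) (h : ‖v‖ = ‖w‖) :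
    ∫ R, φ (AT R v) ∂μ = ∫ R, φ (AT R w) ∂μ := by
  obtain ⟨g, hg⟩ := exists_rot v w h
  have hc : Continuous fun R : SO3 => φ (AT R v) := hφ.comp (AT_cont v)
  have hm : Measurable fun R : SO3 => g * R := (continuous_const_mul g).measurable
  calc ∫ R, φ (AT R v) ∂μ = ∫ R, φ (AT R v) ∂(μ.map (fun h => g * h)) := by rw [hμinv g]
    _ = ∫ R, φ (AT (g * R) v) ∂μ := integral_map hm.aemeasurable hc.aestronglyMeasurable
    _ = ∫ R, φ (AT R w) ∂μ := by
      congr 1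
      ext R
      rw [AT_mul]
      rcases hg with hg | hg
      · rw [hg]
      · rw [hg]
        have : AT R (-w) = - AT R w := by unfold AT; rw [map_neg]
        rw [this, hev]

lemma simplex_basis (v : Fin 4 → E3) (hv : AffineIndependent ℝ v) :
    ∃ b : AffineBasis (Fin 4) ℝ E3, ⇑b = v :=
  ⟨⟨v, hv, (hv.affineSpan_eq_top_iff_card_eq_finrank_add_one).2 (by simp)⟩, rfl⟩

lemma main_aux (b : AffineBasis (Fin 4) ℝ E3) (Δ : Set E3)
    (hΔ : Δ = interior (convexHull ℝ (Set.range b)))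
    (μ : Measure SO3) (hμprob : IsProbabilityMeasure μ)
    (hμinv : ∀ g : SO3, μ.map (fun h => g * h) = μ) (P : ℝ)
    (hP : ∀ v : E3, ‖v‖ = 1 → pf b v ≤ P)
    (N : ℕ) (z : Fin N → ℝ) (x : Fin N → E3) (hx : Function.Injective x)
    (ℓ : ℝ) (hℓ : 0 < ℓ) :
    (1 / (ℓ ^ 3 * (volume Δ).toReal)) *
            (∫ R : SO3, (∫ u : E3, ∑ i : Fin N, ∑ j ∈ Ioi i,
                  z i * z j *
                    Set.indicator
                      ((fun y => Matrix.toEuclideanLin (R : Matrix (Fin 3) (Fin 3) ℝ) y + u) ''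
                        (ℓ • Δ)) (fun _ => (1 : ℝ)) (x i) *
                    Set.indicator
                      ((fun y => Matrix.toEuclideanLin (R : Matrix (Fin 3) (Fin 3) ℝ) y + u) ''
                        (ℓ • Δ)) (fun _ => (1 : ℝ)) (x j) / ‖x i - x j‖) ∂μ) ≤
      ∑ i : Fin N, ∑ j ∈ Ioi i, z i * z j / ‖x i - x j‖ + (3 * P / 2) / ℓ * ∑ i, z i ^ 2 := by
  have hop : IsOpen Δ := hΔ ▸ isOpen_interior
  have hΔ' : Δ = {y | ∀ k, 0 < b.coord k y} := by rw [hΔ, b.interior_convexHull]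
  have hfin : volume Δ ≠ ∞ := by
    have hc : IsCompact (convexHull ℝ (Set.range b)) := (Set.finite_range b).isCompact_convexHull ℝ
    rw [hΔ]
    exact ((measure_mono interior_subset).trans_lt hc.measure_lt_top).ne
  have hpos : 0 < volume.real Δ := by
    refine ENNReal.toReal_pos ?_ hfin
    refine (hop.measure_pos volume ?_).ne'
    rw [hΔ]
    exact ⟨_, b.centroid_mem_interior_convexHull⟩
  set K : ℝ := ℓ ^ 3 * volume.real Δ with hK
  have hKpos : 0 < K := by positivity
  set φ : E3 → ℝ := fun v => (max (1 - pf b (ℓ⁻¹ • v)) 0) ^ 3 with hφ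
  have hφc : Continuous φ := by
    have := pf_cont b
    have h2 : Continuous fun v : E3 => pf b (ℓ⁻¹ • v) := this.comp (by fun_prop)
    rw [hφ]; fun_prop
  have hφe : ∀ v, φ (-v) = φ v := by
    intro v; simp only [hφ, smul_neg, pf_neg]
  have hφ0 : ∀ v, 0 ≤ φ v := fun v => by simp only [hφ]; positivity
  have hφ1 : ∀ v, φ v ≤ 1 := fun v => by
    simp only [hφ]
    apply pow_le_one₀ (le_max_right _ _)
    apply max_le _ zero_le_one
    linarith [pf_nonneg b (ℓ⁻¹ • v)]
  have hφi : ∀ v, Integrable (fun R : SO3 => φ (AT R v)) μ := by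
    intro v
    refine Integrable.of_bound (hφc.comp (AT_cont v)).aestronglyMeasurable 1 ?_
    refine Filter.Eventually.of_forall fun R => ?_
    rw [Real.norm_of_nonneg (hφ0 _)]; exact hφ1 _
  -- inner integral
  have hinner : ∀ R : SO3, (∫ u : E3, ∑ i : Fin N, ∑ j ∈ Ioi i,
                  z i * z j *
                    Set.indicator
                      ((fun y => Matrix.toEuclideanLin (R : Matrix (Fin 3) (Fin 3) ℝ) y + u) ''
                        (ℓ • Δ)) (fun _ => (1 : ℝ)) (x i) *
                    Set.indicator
                      ((fun y => Matrix.toEuclideanLin (R : Matrix (Fin 3) (Fin 3) ℝ) y + u) ''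
                        (ℓ • Δ)) (fun _ => (1 : ℝ)) (x j) / ‖x i - x j‖) =
      K * ∑ i : Fin N, ∑ j ∈ Ioi i, z i * z j / ‖x i - x j‖ * φ (AT R (x i - x j)) := by
    intro R
    have hii := fun i j => inner_integral b Δ hΔ' hop (rotE R) ℓ hℓ (x i) (x j)
    have e : ∀ u : E3, ∑ i : Fin N, ∑ j ∈ Ioi i,
                  z i * z j *
                    Set.indicator
                      ((fun y => Matrix.toEuclideanLin (R : Matrix (Fin 3) (Fin 3) ℝ) y + u) ''
                        (ℓ • Δ)) (fun _ => (1 : ℝ)) (x i) *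
                    Set.indicator
                      ((fun y => Matrix.toEuclideanLin (R : Matrix (Fin 3) (Fin 3) ℝ) y + u) ''
                        (ℓ • Δ)) (fun _ => (1 : ℝ)) (x j) / ‖x i - x j‖ =
        ∑ i : Fin N, ∑ j ∈ Ioi i, z i * z j / ‖x i - x j‖ *
          (Set.indicator ((fun y => rotE R y + u) '' (ℓ • Δ)) (fun _ => (1 : ℝ)) (x i) *
           Set.indicator ((fun y => rotE R y + u) '' (ℓ • Δ)) (fun _ => (1 : ℝ)) (x j)) := by
      intro u
      refine Finset.sum_congr rfl fun i _ => Finset.sum_congr rfl fun j _ => ?_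
      have : (fun y => Matrix.toEuclideanLin (R : Matrix (Fin 3) (Fin 3) ℝ) y + u) =
        fun y => rotE R y + u := rfl
      rw [this]
      ring
    simp_rw [e]
    rw [integral_finsetSum _ (fun i _ => integrable_finsetSum _ fun j _ =>
      ((hii i j).2 hfin).const_mul _), Finset.mul_sum]
    refine Finset.sum_congr rfl fun i _ => ?_
    rw [integral_finsetSum _ (fun j _ => ((hii i j).2 hfin).const_mul _), Finset.mul_sum]
    refine Finset.sum_congr rfl fun j _ => ?_
    rw [integral_const_mul, (hii i j).1]
    have : (rotE R).symm (x i - x j) = AT R (x i - x j) := rfl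
    rw [this]
    simp only [hφ, hK]
    ring
  simp_rw [hinner]
  rw [integral_const_mul]
  have hKe : ℓ ^ 3 * (volume Δ).toReal = K := rfl
  rw [hKe, ← mul_assoc, one_div_mul_cancel hKpos.ne', one_mul]
  set e : E3 := EuclideanSpace.single 0 1 with he
  have hen : ‖e‖ = 1 := by simp [he]
  have hswap : ∫ R : SO3, ∑ i : Fin N, ∑ j ∈ Ioi i,
        z i * z j / ‖x i - x j‖ * φ (AT R (x i - x j)) ∂μ =
      ∫ R : SO3, ∑ i : Fin N, ∑ j ∈ Ioi i,
        z i * z j / ‖x i - x j‖ * φ (AT R (‖x i - x j‖ • e)) ∂μ := by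
    rw [integral_finsetSum _ (fun i _ => integrable_finsetSum _ fun j _ => (hφi _).const_mul _),
      integral_finsetSum _ (fun i _ => integrable_finsetSum _ fun j _ => (hφi _).const_mul _)]
    refine Finset.sum_congr rfl fun i _ => ?_
    rw [integral_finsetSum _ (fun j _ => (hφi _).const_mul _),
      integral_finsetSum _ (fun j _ => (hφi _).const_mul _)]
    refine Finset.sum_congr rfl fun j _ => ?_
    rw [integral_const_mul, integral_const_mul]
    congr 1
    exact rot_average μ hμinv φ hφc hφe _ _ (by simp [norm_smul, hen])
  rw [hswap]
  set B := ∑ i : Fin N, ∑ j ∈ Ioi i, z i * z j / ‖x i - x j‖ + (3 * P / 2) / ℓ * ∑ i, z i ^ 2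
    with hB
  have hbound : ∀ R : SO3, ∑ i : Fin N, ∑ j ∈ Ioi i,
        z i * z j / ‖x i - x j‖ * φ (AT R (‖x i - x j‖ • e)) ≤ B := by
    intro R
    have hATs : ∀ t : ℝ, AT R (t • e) = t • AT R e := fun t => by unfold AT; rw [map_smul]
    have hATn : ‖AT R e‖ = 1 := by
      rw [← hen]; exact (rotE R).symm.norm_map e
    have ha := pf_nonneg b (AT R e)
    have hb := energy_bound z x hx (pf b (AT R e) / ℓ) (by positivity)
    have hz : 0 ≤ ∑ i, z i ^ 2 := Finset.sum_nonneg fun _ _ => sq_nonneg _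
    have hle : 3 * (pf b (AT R e) / ℓ) / 2 ≤ (3 * P / 2) / ℓ := by
      have := hP _ hATn
      rw [show 3 * (pf b (AT R e) / ℓ) / 2 = (3 * pf b (AT R e) / 2) / ℓ by ring]
      gcongr
    have h3 := mul_le_mul_of_nonneg_right hle hz
    have e2 : ∑ i : Fin N, ∑ j ∈ Ioi i, z i * z j / ‖x i - x j‖ * φ (AT R (‖x i - x j‖ • e)) =
      ∑ i, ∑ j ∈ Ioi i, z i * z j / ‖x i - x j‖ *
        (max (1 - pf b (AT R e) / ℓ * ‖x i - x j‖) 0) ^ 3 := by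
      refine Finset.sum_congr rfl fun i _ => Finset.sum_congr rfl fun j _ => ?_
      simp only [hφ]
      rw [hATs, smul_smul, pf_smul _ _ _ (by positivity)]
      congr 4
      field_simp
    rw [e2, hB]
    linarith
  calc _ ≤ ∫ _R : SO3, B ∂μ := by
        refine integral_mono ?_ (integrable_const _) hbound
        exact integrable_finsetSum _ (fun i _ => integrable_finsetSum _ fun j _ => (hφi _).const_mul _)
    _ = B := by simp

/-- The Graf–Schenker inequality: the Coulomb energy of point charges is bounded from below by
its average over rotated and translated copies of a dilated simplex `ℓΔ`, up to an error
`(C/ℓ) Σ z_i²`.  Here `μ` is the Haar probability measure on `SO(3)`. -/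
theorem graf_schenker_inequality
    (Δ : Set (EuclideanSpace ℝ (Fin 3)))
    (hΔ : ∃ v : Fin 4 → EuclideanSpace ℝ (Fin 3), AffineIndependent ℝ v ∧
      Δ = interior (convexHull ℝ (Set.range v)))
    (μ : Measure (Matrix.specialOrthogonalGroup (Fin 3) ℝ))
    (hμprob : IsProbabilityMeasure μ)
    (hμinv : ∀ g : Matrix.specialOrthogonalGroup (Fin 3) ℝ,
      μ.map (fun h => g * h) = μ) :
    ∃ C > 0, ∀ (N : ℕ) (z : Fin N → ℝ) (x : Fin N → EuclideanSpace ℝ (Fin 3)),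
      Function.Injective x → ∀ ℓ : ℝ, 0 < ℓ →
      ∑ i : Fin N, ∑ j ∈ Ioi i, z i * z j / ‖x i - x j‖
        ≥ (1 / (ℓ ^ 3 * (volume Δ).toReal)) *
            (∫ R : Matrix.specialOrthogonalGroup (Fin 3) ℝ,
              (∫ u : EuclideanSpace ℝ (Fin 3),
                ∑ i : Fin N, ∑ j ∈ Ioi i,
                  z i * z j *
                    Set.indicator
                      ((fun y => Matrix.toEuclideanLin (R : Matrix (Fin 3) (Fin 3) ℝ) y + u) ''
                        (ℓ • Δ)) (fun _ => (1 : ℝ)) (x i) *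
                    Set.indicator
                      ((fun y => Matrix.toEuclideanLin (R : Matrix (Fin 3) (Fin 3) ℝ) y + u) ''
                        (ℓ • Δ)) (fun _ => (1 : ℝ)) (x j) / ‖x i - x j‖) ∂μ)
          - (C / ℓ) * ∑ i : Fin N, (z i) ^ 2 := by
  obtain ⟨v, hv, hΔv⟩ := hΔ
  obtain ⟨b, rfl⟩ := simplex_basis v hv
  obtain ⟨P, hP⟩ := (isCompact_sphere (0 : E3) 1).exists_bound_of_continuousOn
    (pf_cont b).continuousOn
  refine ⟨3 * (|P| + 1) / 2, by positivity, ?_⟩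
  intro N z x hx ℓ hℓ
  have h := main_aux b Δ hΔv μ hμprob hμinv (|P| + 1) (fun v hv => by
    have := hP v (by simpa using hv)
    linarith [le_abs_self (pf b v), le_abs_self P, Real.norm_eq_abs (pf b v)]) N z x hx ℓ hℓ
  rw [ge_iff_le, sub_le_iff_le_add]
  exact h
end

section
/- For every ν ≥ 0, every N ∈ ℕ, every q_1, …, q_N ∈ ℝ and every pairwise distinct x_1, …, x_N ∈ ℝ³: Σ_{1 ≤ i < j ≤ N} q_i q_j/‖x_i − x_j‖ ≥ Σ_{1 ≤ i < j ≤ N} q_i q_j · Y_ν(x_i − x_j) − (ν/2)·Σ_{i=1}^N q_i². (The Coulomb energy dominates the Yukawa energy up to a self-energy term.) -/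
open Finset

lemma cy_pow {ι : Type} [Fintype ι] (G : ι → ι → ℝ) (hs : ∀ i j, G i j = G j i)
    (hG : ∀ c : ι → ℝ, 0 ≤ ∑ i, ∑ j, c i * c j * G i j) (k : ℕ) :
    (Matrix.of fun i j => G i j ^ k).PosSemidef := by
  classical
  have key : ∀ H : ι → ι → ℝ, (∀ i j, H i j = H j i) →
      (∀ c : ι → ℝ, 0 ≤ ∑ i, ∑ j, c i * c j * H i j) → (Matrix.of H).PosSemidef := by
    intro H h1 h2
    refine Matrix.PosSemidef.of_dotProduct_mulVec_nonneg ?_ ?_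
    · ext i j
      simp [Matrix.conjTranspose_apply, h1 i j]
    · intro c
      have := h2 c
      refine this.trans_eq ?_
      simp only [dotProduct, Matrix.mulVec, Finset.mul_sum, Matrix.of_apply, Pi.star_apply, star_trivial]
      refine Finset.sum_congr rfl fun i _ => Finset.sum_congr rfl fun j _ => ?_
      ring
  induction k with
  | zero =>
    refine key _ (by simp) ?_
    intro c
    have : ∑ i, ∑ j, c i * c j * G i j ^ 0 = (∑ i, c i) * (∑ j, c j) := by
      rw [Finset.sum_mul_sum]; simp
    rw [this]; exact mul_self_nonneg _
  | succ k ih =>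
    have := ih.hadamard (key G hs hG)
    have he : (Matrix.of fun i j => G i j ^ (k + 1)) =
        (Matrix.of fun i j => G i j ^ k).hadamard (Matrix.of G) := by
      ext i j; simp [pow_succ]
    rw [he]; exact this

lemma cy_schoen {ι : Type} [Fintype ι] (G : ι → ι → ℝ) (hs : ∀ i j, G i j = G j i)
    (hG : ∀ c : ι → ℝ, 0 ≤ ∑ i, ∑ j, c i * c j * G i j) (a c : ι → ℝ) :
    0 ≤ ∑ i, ∑ j, c i * c j * Real.exp (G i j - a i - a j) := by
  have h1 : HasSum (fun k : ℕ => ∑ i, ∑ j, (c i * Real.exp (-a i)) * (c j * Real.exp (-a j)) *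
      (G i j ^ k / (k.factorial : ℝ)))
      (∑ i, ∑ j, (c i * Real.exp (-a i)) * (c j * Real.exp (-a j)) * Real.exp (G i j)) := by
    refine hasSum_sum fun i _ => hasSum_sum fun j _ => HasSum.mul_left _ ?_
    rw [Real.exp_eq_exp_ℝ]
    exact NormedSpace.expSeries_div_hasSum_exp (G i j)
  have h2 := h1.nonneg (fun k => ?_)
  · refine h2.trans_eq ?_
    refine Finset.sum_congr rfl fun i _ => Finset.sum_congr rfl fun j _ => ?_
    rw [show G i j - a i - a j = -a i + -a j + G i j by ring, Real.exp_add, Real.exp_add]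
    ring
  · have h3 := (cy_pow G hs hG k).dotProduct_mulVec_nonneg (fun i => c i * Real.exp (-a i))
    have h4 : (0:ℝ) ≤ 1 / (k.factorial : ℝ) := by positivity
    refine (mul_nonneg h4 h3).trans_eq ?_
    simp only [dotProduct, Matrix.mulVec, Finset.mul_sum, Matrix.of_apply, Pi.star_apply, star_trivial]
    refine Finset.sum_congr rfl fun i _ => Finset.sum_congr rfl fun j _ => ?_
    ring

lemma cy_gauss {ι : Type} [Fintype ι] (x : ι → EuclideanSpace ℝ (Fin 3)) (t : ℝ) (c : ι → ℝ) :
    0 ≤ ∑ i, ∑ j, c i * c j * Real.exp (-(t * ‖x i - x j‖) ^ 2) := by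
  have := cy_schoen (fun i j => 2 * t ^ 2 * inner ℝ (x i) (x j))
    (fun i j => by rw [real_inner_comm]) (fun c => ?_) (fun i => t ^ 2 * ‖x i‖ ^ 2) c
  · refine this.trans_eq ?_
    refine Finset.sum_congr rfl fun i _ => Finset.sum_congr rfl fun j _ => ?_
    rw [mul_pow, norm_sub_sq_real]
    congr 2; ring
  · have h : 0 ≤ 2 * t ^ 2 * ‖∑ i, c i • x i‖ ^ 2 := by positivity
    refine h.trans_eq ?_
    rw [← real_inner_self_eq_norm_sq, sum_inner, Finset.mul_sum]
    refine Finset.sum_congr rfl fun i _ => ?_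
    rw [inner_sum, Finset.mul_sum]
    refine Finset.sum_congr rfl fun j _ => ?_
    rw [real_inner_smul_left, real_inner_smul_right]; ring

noncomputable def cyF (u : ℝ) : ℝ := (1 - Real.exp (-u ^ 2)) / u ^ 2

lemma cyF_nonneg (u : ℝ) : 0 ≤ cyF u := by
  unfold cyF
  have : Real.exp (-u ^ 2) ≤ 1 := Real.exp_le_one_iff.2 (by nlinarith [sq_nonneg u])
  exact div_nonneg (by linarith) (sq_nonneg _)

lemma cyF_int : MeasureTheory.Integrable cyF := by
  refine (integrable_inv_one_add_sq.const_mul 2).mono' ?_ ?_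
  · have : Measurable cyF := by unfold cyF; fun_prop
    exact this.aestronglyMeasurable
  · refine Filter.Eventually.of_forall fun u => ?_
    rw [Real.norm_of_nonneg (cyF_nonneg u)]
    unfold cyF
    rcases eq_or_ne u 0 with rfl | hu
    · simp
    · have h1 := Real.add_one_le_exp (-u ^ 2)
      have h2 := Real.exp_pos (-u ^ 2)
      have h3 : 0 < u ^ 2 := by positivity
      rw [← div_eq_mul_inv, div_le_div_iff₀ h3 (by positivity)]
      nlinarith

lemma cyF_pos : 0 < ∫ u, cyF u := by
  rw [MeasureTheory.integral_pos_iff_support_of_nonneg cyF_nonneg cyF_int]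
  have : Set.Ioo (0:ℝ) 1 ⊆ Function.support cyF := by
    intro u hu
    have h0 : 0 < u ^ 2 := by have := hu.1; positivity
    have : Real.exp (-u ^ 2) < 1 := by rw [← Real.exp_zero]; exact Real.exp_lt_exp.2 (by linarith)
    exact (div_pos (by linarith) h0).ne'
  refine lt_of_lt_of_le ?_ (MeasureTheory.measure_mono this)
  simp

lemma cyF_scale (r t : ℝ) : (1 - Real.exp (-(t * r) ^ 2)) / t ^ 2 = r ^ 2 * cyF (r * t) := by
  unfold cyF
  rcases eq_or_ne r 0 with rfl | hr
  · simp
  rcases eq_or_ne t 0 with rfl | ht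
  · simp
  rw [mul_comm r t]
  field_simp

lemma cy_int (r : ℝ) : MeasureTheory.Integrable (fun t => (1 - Real.exp (-(t * r) ^ 2)) / t ^ 2) := by
  simp_rw [cyF_scale]
  rcases eq_or_ne r 0 with rfl | hr
  · simp
  exact (cyF_int.comp_mul_left' hr).const_mul _

lemma cy_integral (r : ℝ) (h : 0 ≤ r) :
    ∫ t, (1 - Real.exp (-(t * r) ^ 2)) / t ^ 2 = r * ∫ u, cyF u := by
  simp_rw [cyF_scale]
  rw [MeasureTheory.integral_const_mul, MeasureTheory.Measure.integral_comp_mul_left]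
  rcases eq_or_ne r 0 with rfl | hr
  · simp
  rw [abs_of_nonneg (by positivity), smul_eq_mul]
  field_simp

lemma cy_cnd {ι : Type} [Fintype ι] (x : ι → EuclideanSpace ℝ (Fin 3)) (c : ι → ℝ) :
    0 ≤ ∑ i, ∑ j, c i * c j * (‖x i‖ + ‖x j‖ - ‖x i - x j‖) := by
  have hC := cyF_pos
  refine nonneg_of_mul_nonneg_left (b := ∫ u, cyF u) ?_ hC
  let E : ℝ → ℝ → ℝ := fun r t => (1 - Real.exp (-(t * r) ^ 2)) / t ^ 2
  have hE : ∀ r, MeasureTheory.Integrable (E r) := cy_int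
  have h1 : (∑ i, ∑ j, c i * c j * (‖x i‖ + ‖x j‖ - ‖x i - x j‖)) * ∫ u, cyF u
      = ∫ t, ∑ i, ∑ j, c i * c j * (E ‖x i‖ t + E ‖x j‖ t - E ‖x i - x j‖ t) := by
    have hI : ∀ i j, MeasureTheory.Integrable
        (fun t => c i * c j * (E ‖x i‖ t + E ‖x j‖ t - E ‖x i - x j‖ t)) := fun i j =>
      (((hE _).add (hE _)).sub (hE _)).const_mul _
    rw [MeasureTheory.integral_finsetSum _ fun i _ =>
      MeasureTheory.integrable_finsetSum _ fun j _ => hI i j, Finset.sum_mul]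
    refine Finset.sum_congr rfl fun i _ => ?_
    rw [MeasureTheory.integral_finsetSum _ fun j _ => hI i j, Finset.sum_mul]
    refine Finset.sum_congr rfl fun j _ => ?_
    rw [MeasureTheory.integral_const_mul, MeasureTheory.integral_sub (f := fun t => E ‖x i‖ t + E ‖x j‖ t) ((hE _).add (hE _)) (hE _),
      MeasureTheory.integral_add (hE _) (hE _)]
    simp only [E]
    rw [cy_integral _ (norm_nonneg _), cy_integral _ (norm_nonneg _), cy_integral _ (norm_nonneg _)]
    ring
  rw [h1]
  refine MeasureTheory.integral_nonneg fun t => ?_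
  have h2 := cy_gauss (ι := Option ι) (fun o => o.elim 0 x) t (fun o => o.elim (-∑ i, c i) c)
  simp only [Fintype.sum_option, Option.elim, sub_zero, zero_sub, norm_neg, norm_zero] at h2
  have h3 : 0 ≤ 1 / t ^ 2 := by positivity
  refine (mul_nonneg h3 h2).trans_eq ?_
  set e : ι → ℝ := fun i => Real.exp (-(t * ‖x i‖) ^ 2) with he
  have h4 : ∀ i j, c i * c j * (E ‖x i‖ t + E ‖x j‖ t - E ‖x i - x j‖ t) =
    1 / t ^ 2 * (c i * c j - (c i * e i) * c j - c i * (c j * e j)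
      + c i * c j * Real.exp (-(t * ‖x i - x j‖) ^ 2)) := by
    intro i j; simp only [E, he]; ring
  simp only [h4, ← Finset.mul_sum, Finset.sum_add_distrib, Finset.sum_sub_distrib]
  congr 1
  have h5 : ∀ i, c i * -∑ i, c i = (-∑ i, c i) * c i := fun i => by ring
  simp only [h5, mul_assoc, ← Finset.mul_sum, ← Finset.sum_mul]
  have h6 : ∑ x, c x * (e x * ∑ i, c i) = (∑ i, c i) * ∑ x, c x * e x := by
    rw [Finset.mul_sum]
    exact Finset.sum_congr rfl fun i _ => by ring
  rw [h6]
  simp only [he, mul_zero, ne_eq, OfNat.ofNat_ne_zero, not_false_eq_true, zero_pow, neg_zero,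
    Real.exp_zero]
  ring

lemma cy_exp {ι : Type} [Fintype ι] (x : ι → EuclideanSpace ℝ (Fin 3)) (s : ℝ) (hs : 0 ≤ s)
    (c : ι → ℝ) : 0 ≤ ∑ i, ∑ j, c i * c j * Real.exp (-s * ‖x i - x j‖) := by
  have := cy_schoen (fun i j => s * (‖x i‖ + ‖x j‖ - ‖x i - x j‖))
    (fun i j => by rw [norm_sub_rev]; ring) (fun c => ?_) (fun i => s * ‖x i‖) c
  · refine this.trans_eq ?_
    refine Finset.sum_congr rfl fun i _ => Finset.sum_congr rfl fun j _ => ?_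
    congr 2; ring
  · refine (mul_nonneg hs (cy_cnd x c)).trans_eq ?_
    simp only [Finset.mul_sum]
    refine Finset.sum_congr rfl fun i _ => Finset.sum_congr rfl fun j _ => ?_
    ring

lemma cy_kint (ν r : ℝ) (hr : r ≠ 0) :
    ∫ s in (0:ℝ)..ν, Real.exp (-s * r) = 1 / r - Real.exp (-ν * r) / r := by
  have : ∀ s ∈ Set.uIcc 0 ν, HasDerivAt (fun s => - Real.exp (-s * r) / r) (Real.exp (-s * r)) s := by
    intro s _
    have h := (((hasDerivAt_id s).neg.mul_const r).exp.neg).div_const r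
    have h' : -(Real.exp ((-id) s * r) * (-1 * r)) / r = Real.exp (-s * r) := by
      simp only [Pi.neg_apply, id]
      field_simp
    exact h.congr_deriv h'
  rw [intervalIntegral.integral_eq_sub_of_hasDerivAt this (by
    apply Continuous.intervalIntegrable; fun_prop)]
  simp; ring

lemma cy_sum {N : ℕ} (f : Fin N → Fin N → ℝ) (hf : ∀ i j, f i j = f j i) :
    ∑ i, ∑ j, f i j = 2 * (∑ i, ∑ j ∈ Ioi i, f i j) + ∑ i, f i i := by
  have h1 : ∀ i, ∑ j, f i j = ∑ j ∈ Ioi i, f i j + ∑ j ∈ Iio i, f i j + f i i := by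
    intro i
    have : (Finset.univ : Finset (Fin N)) = (Ioi i ∪ Iio i) ∪ {i} := by
      ext j; simp only [mem_univ, mem_union, mem_Ioi, mem_Iio, mem_singleton, true_iff]; omega
    rw [this, Finset.sum_union, Finset.sum_union, Finset.sum_singleton]
    · rw [Finset.disjoint_left]; intro j h h'; simp at h h'; exact lt_asymm h h'
    · simp
  have h2 : ∑ i, ∑ j ∈ Iio i, f i j = ∑ i, ∑ j ∈ Ioi i, f i j := by
    rw [Finset.sum_comm' (t' := Finset.univ) (s' := fun j => Ioi j) (by simp)]
    exact Finset.sum_congr rfl fun i _ => Finset.sum_congr rfl fun j _ => hf j i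
  simp only [h1, Finset.sum_add_distrib, h2]; ring

/-- The Coulomb energy dominates the Yukawa energy up to a self-energy term. -/
theorem coulomb_ge_yukawa (ν : ℝ) (hν : 0 ≤ ν) (N : ℕ) (q : Fin N → ℝ)
    (x : Fin N → EuclideanSpace ℝ (Fin 3)) (hx : Function.Injective x) :
    ∑ i : Fin N, ∑ j ∈ Ioi i, q i * q j / ‖x i - x j‖
      ≥ (∑ i : Fin N, ∑ j ∈ Ioi i,
            q i * q j * (Real.exp (-ν * ‖x i - x j‖) / ‖x i - x j‖))
        - (ν / 2) * ∑ i : Fin N, (q i) ^ 2 := by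
  have h0 : 0 ≤ ∫ s in (0:ℝ)..ν, ∑ i, ∑ j, q i * q j * Real.exp (-s * ‖x i - x j‖) :=
    intervalIntegral.integral_nonneg hν fun s hs => cy_exp x s hs.1 q
  have hI : ∀ i j, IntervalIntegrable (fun s => q i * q j * Real.exp (-s * ‖x i - x j‖))
      MeasureTheory.volume 0 ν := fun i j => by
    apply Continuous.intervalIntegrable; fun_prop
  have h1 : ∫ s in (0:ℝ)..ν, ∑ i, ∑ j, q i * q j * Real.exp (-s * ‖x i - x j‖) =
      ∑ i, ∑ j, q i * q j * ∫ s in (0:ℝ)..ν, Real.exp (-s * ‖x i - x j‖) := by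
    rw [intervalIntegral.integral_finsetSum fun i _ => by
      apply Continuous.intervalIntegrable; fun_prop]
    refine Finset.sum_congr rfl fun i _ => ?_
    rw [intervalIntegral.integral_finsetSum fun j _ => hI i j]
    refine Finset.sum_congr rfl fun j _ => ?_
    rw [intervalIntegral.integral_const_mul]
  rw [h1, cy_sum _ (fun i j => by rw [norm_sub_rev]; ring)] at h0
  have h2 : ∑ i : Fin N, ∑ j ∈ Ioi i, q i * q j * ∫ s in (0:ℝ)..ν, Real.exp (-s * ‖x i - x j‖)
      = ∑ i : Fin N, ∑ j ∈ Ioi i, q i * q j / ‖x i - x j‖ - ∑ i : Fin N, ∑ j ∈ Ioi i,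
            q i * q j * (Real.exp (-ν * ‖x i - x j‖) / ‖x i - x j‖) := by
    simp only [← Finset.sum_sub_distrib]
    refine Finset.sum_congr rfl fun i _ => Finset.sum_congr rfl fun j hj => ?_
    have hij : i ≠ j := (Finset.mem_Ioi.1 hj).ne
    rw [cy_kint _ _ (norm_ne_zero_iff.2 (sub_ne_zero.2 (hx.ne hij)))]
    ring
  have h3 : ∑ i : Fin N, q i * q i * ∫ s in (0:ℝ)..ν, Real.exp (-s * ‖x i - x i‖)
      = ν * ∑ i : Fin N, (q i) ^ 2 := by
    rw [Finset.mul_sum]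
    refine Finset.sum_congr rfl fun i _ => ?_
    simp; ring
  rw [h2, h3] at h0
  linarith
end

section
/- For every δ > 0 there exists a constant C > 0 (depending only on δ) such that for every ν ≥ 0 and all x, y ∈ ℝ³ with ‖x − y‖ ≥ δ: Y_ν(x − y) ≤ C · ∫_{B(y,δ)} Y_ν(x − z) dz, where B(y, δ) is the open ball of radius δ centered at y and the integral is with respect to Lebesgue measure. In particular the constant C is uniform in ν. -/
open MeasureTheory

lemma yuk_integrable (ν : ℝ) (hν : 0 ≤ ν) (R : ℝ) :
    Integrable (fun v : EuclideanSpace ℝ (Fin 3) =>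
      (Set.Ioo 0 R).indicator (fun t : ℝ => Real.exp (-ν * t) / t) ‖v‖) := by
  rw [integrable_fun_norm_addHaar volume
    (f := (Set.Ioo 0 R).indicator (fun t : ℝ => Real.exp (-ν * t) / t))]
  have h : (fun t : ℝ => t ^ (Module.finrank ℝ (EuclideanSpace ℝ (Fin 3)) - 1) •
      (Set.Ioo 0 R).indicator (fun t : ℝ => Real.exp (-ν * t) / t) t)
      = (Set.Ioo 0 R).indicator (fun t : ℝ => t * Real.exp (-ν * t)) := by
    funext t
    by_cases ht : t ∈ Set.Ioo 0 R
    · have := ht.1.ne'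
      simp only [Set.indicator_of_mem ht, finrank_euclideanSpace, Fintype.card_fin, smul_eq_mul]
      field_simp
    · simp [Set.indicator_of_notMem ht]
  rw [h]
  apply Integrable.integrableOn
  rw [integrable_indicator_iff measurableSet_Ioo]
  have : ContinuousOn (fun t : ℝ => t * Real.exp (-ν * t)) (Set.Icc 0 R) := by fun_prop
  exact this.integrableOn_Icc.mono_set Set.Ioo_subset_Icc_self

/-- The Yukawa potential at a point at distance at least `δ` from `y` is controlled by its
average over the ball `B(y, δ)`, uniformly in `ν ≥ 0`. -/
theorem yukawa_le_ball_average (δ : ℝ) (hδ : 0 < δ) :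
    ∃ C > 0, ∀ ν : ℝ, 0 ≤ ν → ∀ x y : EuclideanSpace ℝ (Fin 3), δ ≤ ‖x - y‖ →
      Real.exp (-ν * ‖x - y‖) / ‖x - y‖
        ≤ C * ∫ z in Metric.ball y δ, Real.exp (-ν * ‖x - z‖) / ‖x - z‖ := by
  have hV : ∀ w : EuclideanSpace ℝ (Fin 3), volume.real (Metric.ball w (δ/2)) =
      volume.real (Metric.ball (0 : EuclideanSpace ℝ (Fin 3)) (δ/2)) := by
    intro w
    simp only [Measure.real]
    rw [Measure.addHaar_ball_center]
  set V := volume.real (Metric.ball (0 : EuclideanSpace ℝ (Fin 3)) (δ/2)) with hVdef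
  have hVpos : 0 < V := ENNReal.toReal_pos (Metric.measure_ball_pos _ _ (by positivity)).ne'
    measure_ball_lt_top.ne
  refine ⟨V⁻¹, inv_pos.2 hVpos, ?_⟩
  intro ν hν x y hxy
  set r := ‖x - y‖ with hr
  have hrpos : 0 < r := hδ.trans_le hxy
  set w := y + (δ / 2 / r) • (x - y) with hw
  have hwy : dist w y = δ / 2 := by
    rw [hw, dist_eq_norm, add_sub_cancel_left, norm_smul, ← hr, Real.norm_of_nonneg (by positivity)]
    field_simp
  have hxw : ‖x - w‖ = r - δ / 2 := by
    have : x - w = (1 - δ / 2 / r) • (x - y) := by rw [hw]; module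
    have h2 : 0 ≤ 1 - δ / 2 / r := by
      rw [sub_nonneg, div_le_one hrpos]; linarith
    rw [this, norm_smul, ← hr, Real.norm_of_nonneg h2]
    field_simp
  have hsub : Metric.ball w (δ/2) ⊆ Metric.ball y δ :=
    Metric.ball_subset_ball' (by rw [hwy]; linarith)
  have hint : IntegrableOn (fun z => Real.exp (-ν * ‖x - z‖) / ‖x - z‖) (Metric.ball y δ) := by
    have h := ((yuk_integrable ν hν (r + δ)).comp_sub_left x).integrableOn (s := Metric.ball y δ)
    refine h.congr_fun ?_ measurableSet_ball
    intro z hz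
    have hz' : ‖x - z‖ < r + δ := by
      have := norm_sub_le_norm_sub_add_norm_sub x y z
      rw [Metric.mem_ball, dist_comm, dist_eq_norm] at hz
      linarith
    by_cases h0 : ‖x - z‖ = 0
    · simp [h0]
    · have : ‖x - z‖ ∈ Set.Ioo 0 (r + δ) := ⟨lt_of_le_of_ne (norm_nonneg _) (Ne.symm h0), hz'⟩
      simp only [Set.indicator_of_mem this]
  rw [inv_mul_eq_div, le_div_iff₀ hVpos]
  calc Real.exp (-ν * r) / r * V
      = ∫ z in Metric.ball w (δ/2), Real.exp (-ν * r) / r := by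
        rw [setIntegral_const, hV, smul_eq_mul, mul_comm]
    _ ≤ ∫ z in Metric.ball w (δ/2), Real.exp (-ν * ‖x - z‖) / ‖x - z‖ := by
        apply setIntegral_mono_on _ (hint.mono_set hsub) measurableSet_ball
        · intro z hz
          rw [Metric.mem_ball, dist_comm, dist_eq_norm] at hz
          have h1 := norm_sub_le_norm_sub_add_norm_sub x w z
          have h2 := norm_sub_le_norm_sub_add_norm_sub x z w
          rw [norm_sub_rev z w] at h2
          have h3 : ‖x - z‖ ≤ r := by linarith
          have h4 : 0 < ‖x - z‖ := by linarith
          have h5 : -ν * r ≤ -ν * ‖x - z‖ := by nlinarith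
          gcongr
        · exact integrableOn_const measure_ball_lt_top.ne
    _ ≤ _ := by
        apply setIntegral_mono_set hint
        · exact Filter.Eventually.of_forall fun z => by positivity
        · exact hsub.eventuallyLE
end

section
/- For every δ > 0 there exists a constant C > 0 (depending only on δ) such that the following holds: for every countable δ-separated set L ⊆ ℝ³, every ν > 0 and every x ∈ ℝ³ with x ∉ L, Σ_{R ∈ L} Y_ν(x − R) ≤ 1/dist(x, L) + C/ν², where dist(x, L) = inf{‖x − R‖ : R ∈ L}. -/
open MeasureTheory

lemma yuk_int : Integrable (fun z : EuclideanSpace ℝ (Fin 3) => Real.exp (-(2/3) * ‖z‖) / ‖z‖) := by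
  have h := integrable_fun_norm_addHaar (volume : Measure (EuclideanSpace ℝ (Fin 3)))
    (f := fun r : ℝ => Real.exp (-(2/3) * r) / r)
  rw [h]
  have h2 : IntegrableOn (fun r : ℝ => r ^ (1:ℝ) * Real.exp (-(2/3) * r ^ (1:ℝ))) (Set.Ioi 0) :=
    integrableOn_rpow_mul_exp_neg_mul_rpow (by norm_num) (by norm_num) (by norm_num)
  refine h2.congr_fun ?_ measurableSet_Ioi
  intro r hr
  have hr' : r ≠ 0 := ne_of_gt hr
  simp
  field_simp

/-- Statement for one finite family of far points. -/
lemma yuk_far (δ : ℝ) (hδ : 0 < δ) (L : Set (EuclideanSpace ℝ (Fin 3)))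
    (hL : ∀ p ∈ L, ∀ q ∈ L, p ≠ q → δ ≤ ‖p - q‖) (ν : ℝ) (hν : 0 < ν)
    (x : EuclideanSpace ℝ (Fin 3)) (s : Finset L)
    (hs : ∀ R ∈ s, δ / 2 ≤ ‖x - (R : EuclideanSpace ℝ (Fin 3))‖) :
    ∑ R ∈ s, Real.exp (-ν * ‖x - (R : EuclideanSpace ℝ (Fin 3))‖)
            / ‖x - (R : EuclideanSpace ℝ (Fin 3))‖ ≤
    ((3/2) * (∫ z : EuclideanSpace ℝ (Fin 3), Real.exp (-(2/3) * ‖z‖) / ‖z‖) /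
      volume.real (Metric.ball (0 : EuclideanSpace ℝ (Fin 3)) (δ/4))) / ν ^ 2 := by
  set G : EuclideanSpace ℝ (Fin 3) → ℝ := fun z => Real.exp (-(2/3) * ‖z‖) / ‖z‖ with hG
  set v := volume.real (Metric.ball (0 : EuclideanSpace ℝ (Fin 3)) (δ/4)) with hv
  have hvpos : 0 < v := by
    apply ENNReal.toReal_pos
    · exact (Metric.measure_ball_pos volume _ (by positivity)).ne'
    · exact measure_ball_lt_top.ne
  have hvR : ∀ R : EuclideanSpace ℝ (Fin 3), volume.real (Metric.ball R (δ/4)) = v := by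
    intro R
    simp only [hv, Measure.real]
    rw [Measure.addHaar_ball_center]
  set F : EuclideanSpace ℝ (Fin 3) → ℝ := fun y => (3/2) * (ν * G (ν • (y - x))) with hF
  have hF0 : ∀ y, 0 ≤ F y := fun y => by simp only [hF, hG]; positivity
  have hFint : Integrable F := by
    have h1 : Integrable (fun y => G (ν • y)) := yuk_int.comp_smul hν.ne'
    exact ((h1.comp_sub_right x).const_mul ν).const_mul _
  have hFval : ∫ y, F y = (3/2) * (∫ z, G z) / ν ^ 2 := by
    simp only [hF]
    rw [integral_const_mul, integral_const_mul,
      integral_sub_right_eq_self (fun y => G (ν • y)) x, Measure.integral_comp_smul]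
    simp only [finrank_euclideanSpace, Fintype.card_fin, smul_eq_mul]
    rw [abs_of_pos (by positivity)]
    field_simp
  have hpt : ∀ R ∈ s, v * (Real.exp (-ν * ‖x - (R : EuclideanSpace ℝ (Fin 3))‖)
            / ‖x - (R : EuclideanSpace ℝ (Fin 3))‖) ≤
      ∫ y in Metric.ball (R : EuclideanSpace ℝ (Fin 3)) (δ/4), F y := by
    intro R hR
    have hr := hs R hR
    set r := ‖x - (R : EuclideanSpace ℝ (Fin 3))‖ with hrdef
    have : v * (Real.exp (-ν * r) / r) =
        ∫ y in Metric.ball (R : EuclideanSpace ℝ (Fin 3)) (δ/4), Real.exp (-ν * r) / r := by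
      rw [setIntegral_const, hvR, smul_eq_mul]
    rw [this]
    refine setIntegral_mono_on ?_ hFint.integrableOn measurableSet_ball ?_
    · exact integrableOn_const measure_ball_lt_top.ne
    intro y hy
    rw [mem_ball_iff_norm] at hy
    have e1 : ‖y - x‖ ≤ r + δ/4 := by
      have := norm_sub_le (y - (R : EuclideanSpace ℝ (Fin 3))) (x - R)
      rw [sub_sub_sub_cancel_right] at this
      linarith
    have e2 : r ≤ ‖y - x‖ + δ/4 := by
      have := norm_sub_le (y - (R : EuclideanSpace ℝ (Fin 3))) (y - x)
      rw [sub_sub_sub_cancel_left] at this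
      linarith
    simp only [hF, hG, norm_smul, Real.norm_eq_abs, abs_of_pos hν]
    set d := ‖y - x‖
    have hd : 0 < d := by linarith
    have hr0 : 0 < r := by linarith
    have : (3/2) * (ν * (Real.exp (-(2/3) * (ν * d)) / (ν * d))) =
      Real.exp (-(2/3) * (ν * d)) / ((2/3) * d) := by field_simp
    rw [this]
    gcongr ?_ / ?_
    · apply Real.exp_le_exp.mpr
      nlinarith
    · linarith
  have hdisj : Set.Pairwise (s : Set L)
      (Function.onFun Disjoint fun R : L => Metric.ball (R : EuclideanSpace ℝ (Fin 3)) (δ/4)) := by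
    intro p _ q _ hpq
    apply Metric.ball_disjoint_ball
    have := hL p p.2 q q.2 (fun h => hpq (Subtype.ext h))
    rw [dist_eq_norm]
    linarith
  have hsum : v * ∑ R ∈ s, (Real.exp (-ν * ‖x - (R : EuclideanSpace ℝ (Fin 3))‖)
            / ‖x - (R : EuclideanSpace ℝ (Fin 3))‖) ≤ (3/2) * (∫ z, G z) / ν ^ 2 := by
    rw [Finset.mul_sum, ← hFval]
    refine (Finset.sum_le_sum hpt).trans ?_
    rw [← integral_biUnion_finset s (fun _ _ => measurableSet_ball) hdisj
      (fun _ _ => hFint.integrableOn)]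
    exact setIntegral_le_integral hFint (Filter.Eventually.of_forall hF0)
  rw [div_right_comm, le_div_iff₀ hvpos, mul_comm]
  exact hsum

/-- Sum of Yukawa potentials over a countable `δ`-separated set of nuclei:
the closest nucleus dominates up to an error of order `ν⁻²`. -/
theorem yukawa_sum_over_separated_set (δ : ℝ) (hδ : 0 < δ) :
    ∃ C > 0, ∀ L : Set (EuclideanSpace ℝ (Fin 3)), L.Countable →
      (∀ p ∈ L, ∀ q ∈ L, p ≠ q → δ ≤ ‖p - q‖) →
      ∀ ν : ℝ, 0 < ν → ∀ x : EuclideanSpace ℝ (Fin 3), x ∉ L →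
        ∑' R : L, Real.exp (-ν * ‖x - (R : EuclideanSpace ℝ (Fin 3))‖)
            / ‖x - (R : EuclideanSpace ℝ (Fin 3))‖
          ≤ 1 / Metric.infDist x L + C / ν ^ 2 := by
  classical
  set K := (3/2) * (∫ z : EuclideanSpace ℝ (Fin 3), Real.exp (-(2/3) * ‖z‖) / ‖z‖) /
      volume.real (Metric.ball (0 : EuclideanSpace ℝ (Fin 3)) (δ/4)) with hK
  have hK0 : 0 ≤ K := by
    have : 0 ≤ ∫ z : EuclideanSpace ℝ (Fin 3), Real.exp (-(2/3) * ‖z‖) / ‖z‖ :=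
      integral_nonneg fun z => by positivity
    positivity
  refine ⟨K + 1, by positivity, ?_⟩
  intro L _ hL ν hν x hx
  have hmono : K / ν ^ 2 ≤ (K + 1) / ν ^ 2 := by gcongr; linarith
  have hinf : 0 ≤ 1 / Metric.infDist x L := by
    have := Metric.infDist_nonneg (x := x) (s := L)
    positivity
  refine Real.tsum_le_of_sum_le (fun R => by positivity) ?_
  intro s
  by_cases hfar : ∀ R ∈ s, δ / 2 ≤ ‖x - (R : EuclideanSpace ℝ (Fin 3))‖
  · have := yuk_far δ hδ L hL ν hν x s hfar
    linarith
  push Not at hfar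
  obtain ⟨R₀, hR₀, hlt⟩ := hfar
  have hoth : ∀ q ∈ L, q ≠ (R₀ : EuclideanSpace ℝ (Fin 3)) → δ / 2 ≤ ‖x - q‖ := by
    intro q hq hne
    have h1 := hL q hq R₀ R₀.2 hne
    have h2 := norm_sub_le (x - (R₀ : EuclideanSpace ℝ (Fin 3))) (x - q)
    rw [sub_sub_sub_cancel_left] at h2
    linarith
  have hd : Metric.infDist x L = ‖x - (R₀ : EuclideanSpace ℝ (Fin 3))‖ := by
    apply le_antisymm
    · rw [← dist_eq_norm]
      exact Metric.infDist_le_dist_of_mem R₀.2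
    · refine (Metric.le_infDist ⟨_, R₀.2⟩).2 ?_
      intro q hq
      rw [dist_eq_norm]
      by_cases h : q = R₀
      · rw [h]
      · linarith [hoth q hq h]
  rw [← Finset.add_sum_erase s _ hR₀, hd]
  have h1 := yuk_far δ hδ L hL ν hν x (s.erase R₀) (fun R hR =>
    hoth R R.2 (fun h => (Finset.mem_erase.1 hR).1 (Subtype.ext h)))
  have h2 : Real.exp (-ν * ‖x - (R₀ : EuclideanSpace ℝ (Fin 3))‖)
      / ‖x - (R₀ : EuclideanSpace ℝ (Fin 3))‖ ≤ 1 / ‖x - (R₀ : EuclideanSpace ℝ (Fin 3))‖ := by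
    gcongr
    apply Real.exp_le_one_iff.2
    have := norm_nonneg (x - (R₀ : EuclideanSpace ℝ (Fin 3)))
    nlinarith
  linarith
end

section
/- For every δ > 0 there exists a constant C > 0 (depending only on δ) such that for every finite δ-separated set S ⊆ ℝ³ with N := #S ≥ 2: Σ_{p, q ∈ S, p ≠ q} 1/‖p − q‖³ ≤ C · N · log N. -/
open Finset
open scoped Classical

lemma aux_rank {α : Type*} (f : α → ℝ) (K : ℝ) (T : Finset α) :
    (∀ q ∈ T, 0 < f q) → (∀ q ∈ T, ((T.filter (fun x => f x ≤ f q)).card : ℝ) ≤ K * f q) →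
    ∑ q ∈ T, 1 / f q ≤ K * ((harmonic T.card : ℚ) : ℝ) := by
  induction T using Finset.induction_on_max_value f with
  | empty => intro _ _; simp
  | insert a s ha hmax ih =>
    intro hpos hcard
    have h1 := ih (fun q hq => hpos q (mem_insert_of_mem hq)) (fun q hq => by
      refine le_trans ?_ (hcard q (mem_insert_of_mem hq))
      exact_mod_cast card_le_card (filter_subset_filter _ (subset_insert a s)))
    have h2 := hcard a (mem_insert_self a s)
    have hfa := hpos a (mem_insert_self a s)
    rw [filter_true_of_mem (by
      intro x hx
      rcases mem_insert.1 hx with rfl | h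
      · exact le_rfl
      · exact hmax x h), card_insert_of_notMem ha] at h2
    rw [sum_insert ha, card_insert_of_notMem ha, harmonic_succ]
    push_cast at h2 ⊢
    have h3 : 1 / f a ≤ K * ((s.card : ℝ) + 1)⁻¹ := by
      rw [← div_eq_mul_inv, div_le_div_iff₀ hfa (by positivity)]
      linarith
    rw [mul_add]
    linarith

lemma aux_pack (δ : ℝ) (hδ : 0 < δ) (T : Finset (EuclideanSpace ℝ (Fin 3)))
    (hT : ∀ p ∈ T, ∀ q ∈ T, p ≠ q → δ ≤ ‖p - q‖) (p : EuclideanSpace ℝ (Fin 3)) (R : ℝ)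
    (hR : δ ≤ R) (hp : ∀ q ∈ T, ‖p - q‖ ≤ R) : (T.card : ℝ) ≤ 27 / δ ^ 3 * R ^ 3 := by
  let μ : MeasureTheory.Measure (EuclideanSpace ℝ (Fin 3)) := MeasureTheory.volume
  have hd : (T : Set (EuclideanSpace ℝ (Fin 3))).PairwiseDisjoint
      (fun q => Metric.ball q (δ / 2)) := by
    intro x hx y hy hxy
    apply Metric.ball_disjoint_ball
    rw [dist_eq_norm]
    linarith [hT x hx y hy hxy]
  have h1 : μ (⋃ q ∈ T, Metric.ball q (δ / 2)) = ∑ q ∈ T, μ (Metric.ball q (δ / 2)) :=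
    MeasureTheory.measure_biUnion_finset hd (fun q _ => measurableSet_ball)
  have h2 : (⋃ q ∈ T, Metric.ball q (δ / 2)) ⊆ Metric.ball p (R + δ / 2) := by
    refine Set.iUnion₂_subset fun q hq => Metric.ball_subset_ball' ?_
    rw [dist_comm, dist_eq_norm]
    linarith [hp q hq]
  have h3 := MeasureTheory.measure_mono (μ := μ) h2
  rw [h1] at h3
  have hb : ∀ (x : EuclideanSpace ℝ (Fin 3)) (r : ℝ), 0 < r →
      μ (Metric.ball x r) = ENNReal.ofReal (r ^ 3) * μ (Metric.ball 0 1) := by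
    intro x r hr
    have := MeasureTheory.Measure.addHaar_ball_of_pos μ x hr
    simpa using this
  have hμ0 : μ (Metric.ball 0 1) ≠ 0 := (Metric.measure_ball_pos μ 0 one_pos).ne'
  have hμt : μ (Metric.ball 0 1) ≠ ⊤ := MeasureTheory.measure_ball_lt_top.ne
  rw [sum_congr rfl (fun q _ => hb q (δ / 2) (by positivity)), hb p _ (by linarith),
    sum_const, nsmul_eq_mul, ← mul_assoc, ENNReal.mul_le_mul_iff_left hμ0 hμt,
    ← ENNReal.ofReal_natCast, ← ENNReal.ofReal_mul (by positivity),
    ENNReal.ofReal_le_ofReal_iff (by have : 0 < R := by linarith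
                                     positivity)] at h3
  have h4 : (R + δ / 2) ^ 3 ≤ (3 / 2 * R) ^ 3 :=
    pow_le_pow_left₀ (by linarith) (by linarith) 3
  rw [div_mul_eq_mul_div, le_div_iff₀ (by positivity)]
  nlinarith

/-- Dipole–dipole interaction estimate: for a finite `δ`-separated set of `N ≥ 2` points in `ℝ³`,
the total inverse-cube interaction is at most `C · N · log N`. -/
theorem inverse_cube_sum_separated (δ : ℝ) (hδ : 0 < δ) :
    ∃ C > 0, ∀ S : Finset (EuclideanSpace ℝ (Fin 3)),
      (∀ p ∈ S, ∀ q ∈ S, p ≠ q → δ ≤ ‖p - q‖) → 2 ≤ S.card →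
        ∑ p ∈ S, ∑ q ∈ S \ {p}, 1 / ‖p - q‖ ^ 3
          ≤ C * S.card * Real.log S.card := by
  have hl2 : 0 < Real.log 2 := Real.log_pos (by norm_num)
  refine ⟨27 / δ ^ 3 * (1 / Real.log 2 + 1), by positivity, fun S hS hN => ?_⟩
  have hN' : (2 : ℝ) ≤ S.card := by exact_mod_cast hN
  have hlog : Real.log 2 ≤ Real.log S.card := Real.log_le_log (by norm_num) hN'
  have key : ∀ p ∈ S, ∑ q ∈ S \ {p}, 1 / ‖p - q‖ ^ 3 ≤
      27 / δ ^ 3 * (1 / Real.log 2 + 1) * Real.log S.card := by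
    intro p hp
    have hsep : ∀ q ∈ S \ {p}, δ ≤ ‖p - q‖ := by
      intro q hq
      simp only [mem_sdiff, mem_singleton] at hq
      exact hS p hp q hq.1 (Ne.symm hq.2)
    have h1 := aux_rank (fun q => ‖p - q‖ ^ 3) (27 / δ ^ 3) (S \ {p})
      (fun q hq => pow_pos (hδ.trans_le (hsep q hq)) 3)
      (fun q hq => by
        refine aux_pack δ hδ _ ?_ p ‖p - q‖ (hsep q hq) ?_
        · intro x hx y hy hxy
          exact hS x (mem_sdiff.1 (mem_filter.1 hx).1).1 y (mem_sdiff.1 (mem_filter.1 hy).1).1 hxy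
        · intro x hx
          exact le_of_pow_le_pow_left₀ (by norm_num) (norm_nonneg _) (mem_filter.1 hx).2)
    have h2 := harmonic_le_one_add_log (S \ {p}).card
    have hc : (S \ {p}).card = S.card - 1 := by
      rw [sdiff_singleton_eq_erase, card_erase_of_mem hp]
    have h3 : Real.log (S \ {p}).card ≤ Real.log S.card := by
      apply Real.log_le_log
      · rw [hc]; exact_mod_cast (by omega : 0 < S.card - 1)
      · exact_mod_cast card_le_card sdiff_subset
    have h4 : 1 ≤ 1 / Real.log 2 * Real.log S.card := by
      rw [div_mul_eq_mul_div, one_mul, le_div_iff₀ hl2]; linarith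
    refine h1.trans ?_
    rw [mul_assoc]
    apply mul_le_mul_of_nonneg_left _ (by positivity)
    linarith
  refine (sum_le_sum key).trans (le_of_eq ?_)
  rw [sum_const, nsmul_eq_mul]
  ring
end

section
/- For every measurable function ρ : ℝ³ → [0, ∞), every R ∈ ℝ³ and every λ > 0: ∫_{ℝ³} ρ(x)/‖x − R‖ dx ≤ (8π)^{2/5} · λ^{1/5} · (∫_{ℝ³} ρ(x)^{5/3} dx)^{3/5} + λ^{−1} · ∫_{ℝ³} ρ(x) dx. -/
open MeasureTheory
open scoped ENNReal

lemma kernel_aux (lam : ℝ) (hlam : 0 < lam) (R : EuclideanSpace ℝ (Fin 3)) :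
    ∫⁻ x : EuclideanSpace ℝ (Fin 3), ENNReal.ofReal
      ((Set.Ioc 0 lam).indicator (fun r : ℝ => r ^ (-(5 : ℝ) / 2)) ‖x - R‖)
      = ENNReal.ofReal (8 * Real.pi * lam ^ ((1 : ℝ) / 2)) := by
  set h : ℝ → ℝ := (Set.Ioc 0 lam).indicator (fun r : ℝ => r ^ (-(5 : ℝ) / 2)) with hh
  rw [lintegral_sub_right_eq_self
    (fun x : EuclideanSpace ℝ (Fin 3) => ENNReal.ofReal (h ‖x‖)) R]
  have hnn : ∀ r, 0 ≤ h r := fun r => Set.indicator_nonneg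
    (fun r hr => Real.rpow_nonneg hr.1.le _) r
  have heq : ∀ y : ℝ, y ^ (Module.finrank ℝ (EuclideanSpace ℝ (Fin 3)) - 1) • h y
      = (Set.Ioc 0 lam).indicator (fun r : ℝ => r ^ (-(1 : ℝ) / 2)) y := by
    intro y
    by_cases hy : y ∈ Set.Ioc 0 lam
    · simp only [hh, Set.indicator_of_mem hy, finrank_euclideanSpace_fin, smul_eq_mul]
      rw [← Real.rpow_natCast, ← Real.rpow_add hy.1]
      norm_num
    · simp only [hh, Set.indicator_of_notMem hy, smul_zero]
  have hsub : Set.Ioc 0 lam ∩ Set.Ioi 0 = Set.Ioc 0 lam :=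
    Set.inter_eq_left.2 (fun x hx => hx.1)
  have hi : IntegrableOn (fun r : ℝ => r ^ (-(1 : ℝ) / 2)) (Set.Ioc 0 lam) := by
    rw [← intervalIntegrable_iff_integrableOn_Ioc_of_le hlam.le]
    exact intervalIntegral.intervalIntegrable_rpow' (by norm_num)
  have hint : Integrable (fun x : EuclideanSpace ℝ (Fin 3) => h ‖x‖) := by
    rw [integrable_fun_norm_addHaar]
    simp_rw [heq]
    rw [IntegrableOn, integrable_indicator_iff measurableSet_Ioc, IntegrableOn,
      Measure.restrict_restrict measurableSet_Ioc, hsub]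
    exact hi
  rw [← ofReal_integral_eq_lintegral_ofReal hint (Filter.Eventually.of_forall fun x => hnn _),
    integral_fun_norm_addHaar]
  simp_rw [heq]
  rw [integral_indicator measurableSet_Ioc, Measure.restrict_restrict measurableSet_Ioc, hsub,
    ← intervalIntegral.integral_of_le hlam.le, integral_rpow (Or.inl (by norm_num))]
  congr 1
  have : volume.real (Metric.ball (0 : EuclideanSpace ℝ (Fin 3)) 1) = Real.pi * 4 / 3 := by
    rw [Measure.real, EuclideanSpace.volume_ball_fin_three]
    simp [ENNReal.toReal_ofReal, Real.pi_pos.le]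
    positivity
  rw [this, finrank_euclideanSpace_fin]
  norm_num
  ring

/-- Splitting the Coulomb integral `∫ ρ(x)/‖x − R‖ dx` at distance `λ` and applying Hölder's
inequality. -/
theorem coulomb_integral_split (ρ : EuclideanSpace ℝ (Fin 3) → ℝ)
    (hρ : Measurable ρ) (hρ0 : ∀ x, 0 ≤ ρ x)
    (R : EuclideanSpace ℝ (Fin 3)) (lam : ℝ) (hlam : 0 < lam) :
    ∫⁻ x, ENNReal.ofReal (ρ x / ‖x - R‖)
      ≤ ENNReal.ofReal ((8 * Real.pi) ^ ((2 : ℝ) / 5) * lam ^ ((1 : ℝ) / 5)) *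
          (∫⁻ x, ENNReal.ofReal (ρ x ^ ((5 : ℝ) / 3))) ^ ((3 : ℝ) / 5)
        + ENNReal.ofReal lam⁻¹ * ∫⁻ x, ENNReal.ofReal (ρ x) := by
  set k : ℝ → ℝ := (Set.Ioc 0 lam).indicator (fun r : ℝ => r⁻¹) with hk
  have hkm : Measurable k := measurable_inv.indicator measurableSet_Ioc
  have hk0 : ∀ r, 0 ≤ k r := fun r => Set.indicator_nonneg
    (fun r hr => inv_nonneg.2 hr.1.le) r
  have hpt : ∀ x, ENNReal.ofReal (ρ x / ‖x - R‖) ≤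
      ((fun x => ENNReal.ofReal (ρ x)) * (fun x => ENNReal.ofReal (k ‖x - R‖))) x
        + ENNReal.ofReal lam⁻¹ * ENNReal.ofReal (ρ x) := by
    intro x
    rw [Pi.mul_apply, ← ENNReal.ofReal_mul (hρ0 x), ← ENNReal.ofReal_mul (by positivity),
      ← ENNReal.ofReal_add (mul_nonneg (hρ0 x) (hk0 _))
        (mul_nonneg (by positivity) (hρ0 x))]
    apply ENNReal.ofReal_le_ofReal
    have hl : 0 ≤ lam⁻¹ * ρ x := mul_nonneg (by positivity) (hρ0 x)
    by_cases hx : ‖x - R‖ ∈ Set.Ioc 0 lam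
    · rw [hk, Set.indicator_of_mem hx, div_eq_mul_inv]
      linarith
    · rw [hk, Set.indicator_of_notMem hx, mul_zero, zero_add]
      rcases (norm_nonneg (x - R)).eq_or_lt with h0 | h0
      · rw [← h0, div_zero]; exact hl
      · have : lam < ‖x - R‖ := by
          by_contra hc
          exact hx ⟨h0, not_lt.1 hc⟩
        rw [div_eq_mul_inv, mul_comm]
        exact mul_le_mul_of_nonneg_right (inv_anti₀ hlam this.le) (hρ0 x)
  have hpq : ((5 : ℝ) / 3).HolderConjugate (5 / 2) := by
    rw [Real.holderConjugate_iff]; norm_num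
  have hgm : Measurable (fun x => ENNReal.ofReal (k ‖x - R‖)) := by fun_prop
  have hH := ENNReal.lintegral_mul_le_Lp_mul_Lq volume hpq
    (hρ.ennreal_ofReal.aemeasurable) hgm.aemeasurable
  have h1 : ∀ x, ENNReal.ofReal (ρ x) ^ ((5 : ℝ) / 3) = ENNReal.ofReal (ρ x ^ ((5 : ℝ) / 3)) :=
    fun x => ENNReal.ofReal_rpow_of_nonneg (hρ0 x) (by norm_num)
  have h2 : ∀ x, ENNReal.ofReal (k ‖x - R‖) ^ ((5 : ℝ) / 2) = ENNReal.ofReal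
      ((Set.Ioc 0 lam).indicator (fun r : ℝ => r ^ (-(5 : ℝ) / 2)) ‖x - R‖) := by
    intro x
    rw [ENNReal.ofReal_rpow_of_nonneg (hk0 _) (by norm_num)]
    congr 1
    by_cases hx : ‖x - R‖ ∈ Set.Ioc 0 lam
    · rw [hk, Set.indicator_of_mem hx, Set.indicator_of_mem hx, neg_div,
        Real.rpow_neg hx.1.le, Real.inv_rpow hx.1.le]
    · rw [hk, Set.indicator_of_notMem hx, Set.indicator_of_notMem hx,
        Real.zero_rpow (by norm_num)]
  simp_rw [h1, h2] at hH
  rw [kernel_aux lam hlam R, ENNReal.ofReal_rpow_of_nonneg (by positivity) (by norm_num),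
    Real.mul_rpow (by positivity) (by positivity), ← Real.rpow_mul hlam.le] at hH
  norm_num only at hH
  calc _ ≤ _ := lintegral_mono hpt
    _ = _ := lintegral_add_right _ (hρ.ennreal_ofReal.const_mul _)
    _ ≤ _ := by
      rw [lintegral_const_mul _ hρ.ennreal_ofReal]
      refine add_le_add ?_ le_rfl
      norm_num only
      exact hH.trans_eq (mul_comm _ _)
end
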